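/- arXiv:1306.0323 — 4 statements merged into one kernel-verified Lean document; each statement's English description precedes it below -/
import Mathlib

section
/- Assume ∫ₐᵇ w ≠ 0 and set δ := 2 + 2‖w‖_{L¹}/|∫ₐᵇ w|. Fix l, r ∈ ℝ and set α := |l| + |r| + ‖q₋‖_{L¹}. Assume there exists a real-valued absolutely continuous function g on [a,b] with g(a) = g(b) = 0, ∫ₐᵇ p|g'|² < ∞, and g(x)w(x) > 0 a.e. on (a,b), and let ε > 0 satisfy μ_{1/p}({x ∈ [a,b] : p(x)g(x)w(x) < ε}) ≤ 1/(2αδ²). Then every λ ∈ ℂ with Im λ ≠ 0 for which there exists a solution (φ, u) of −(pφ')' + qφ = λwφ with φ not identically zero and u(a) = l·φ(a), u(b) = r·φ(b), satisfies |Im λ| ≤ (2/ε)·α^{3/2}·δ²·‖g'‖_{p,2} and |Re λ| ≤ (2/ε)·α·δ²·(√α·‖g'‖_{p,2} + (α + ‖q‖_{L¹})·‖g‖_∞). -/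
open MeasureTheory Real Complex

/-- Cauchy-Schwarz in quadratic form. -/
lemma aux_cs {μ : Measure ℝ} {A B C : ℝ → ℝ} (hA : Integrable A μ) (hB : Integrable B μ)
    (hC : Integrable C μ)
    (h : ∀ᵐ x ∂μ, 0 ≤ A x ∧ 0 ≤ B x ∧ C x ^ 2 ≤ A x * B x) :
    (∫ x, C x ∂μ) ^ 2 ≤ (∫ x, A x ∂μ) * (∫ x, B x ∂μ) := by
  have key : ∀ s : ℝ, 0 ≤ (∫ x, A x ∂μ) * (s * s) + (2 * ∫ x, C x ∂μ) * s + ∫ x, B x ∂μ := by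
    intro s
    have : (∫ x, A x ∂μ) * (s * s) + (2 * ∫ x, C x ∂μ) * s + ∫ x, B x ∂μ
        = ∫ x, (A x * (s * s) + C x * (2 * s) + B x) ∂μ := by
      rw [integral_add, integral_add, integral_mul_const, integral_mul_const]
      · ring
      · exact hA.mul_const _
      · exact hC.mul_const _
      · exact (hA.mul_const _).add (hC.mul_const _)
      · exact hB
    rw [this]
    apply integral_nonneg_of_ae
    filter_upwards [h] with x hx
    obtain ⟨h1, h2, h3⟩ := hx
    simp only [Pi.zero_apply]
    rcases h1.eq_or_lt with h0 | h0
    · rw [← h0] at h3 ⊢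
      have : C x = 0 := by
        have : C x ^ 2 ≤ 0 := by simpa using h3
        exact pow_eq_zero_iff (two_ne_zero) |>.1 (le_antisymm this (sq_nonneg _))
      rw [this]; simpa using h2
    · have : 0 ≤ A x * (A x * (s * s) + C x * (2 * s) + B x) := by
        nlinarith [sq_nonneg (A x * s + C x)]
      exact nonneg_of_mul_nonneg_right this h0
  have := discrim_le_zero key
  unfold discrim at this
  nlinarith

lemma aux_ac {a b : ℝ} {f : ℝ → ℂ} (hf : IntervalIntegrable f volume a b) :
    AbsolutelyContinuousOnInterval (fun x => ∫ t in a..x, f t) a b := by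
  have hre : IntervalIntegrable (fun t => (f t).re) volume a b :=
    ⟨hf.1.re, hf.2.re⟩
  have him : IntervalIntegrable (fun t => (f t).im) volume a b :=
    ⟨hf.1.im, hf.2.im⟩
  have h1 := hre.absolutelyContinuousOnInterval_intervalIntegral (c := a) (by simp)
  have h2 := him.absolutelyContinuousOnInterval_intervalIntegral (c := a) (by simp)
  rw [absolutelyContinuousOnInterval_iff] at h1 h2 ⊢
  intro ε hε
  obtain ⟨d1, hd1, H1⟩ := h1 (ε / 2) (by positivity)
  obtain ⟨d2, hd2, H2⟩ := h2 (ε / 2) (by positivity)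
  refine ⟨min d1 d2, lt_min hd1 hd2, fun E hE hlt => ?_⟩
  have k1 := H1 E hE (hlt.trans_le (min_le_left _ _))
  have k2 := H2 E hE (hlt.trans_le (min_le_right _ _))
  have k3 : (∑ i ∈ Finset.range E.1, dist (∫ t in a..(E.2 i).1, (f t).re) (∫ t in a..(E.2 i).2, (f t).re))
      + ∑ i ∈ Finset.range E.1, dist (∫ t in a..(E.2 i).1, (f t).im) (∫ t in a..(E.2 i).2, (f t).im) < ε := by linarith
  refine lt_of_le_of_lt ?_ k3
  rw [← Finset.sum_add_distrib]
  apply Finset.sum_le_sum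
  intro i hi
  have hm := hE.1 i hi
  have hsub : ∀ y ∈ Set.uIcc a b, IntervalIntegrable f volume a y := fun y hy =>
    hf.mono_set (Set.uIcc_subset_uIcc_left hy)
  have ere : ∀ y ∈ Set.uIcc a b, (∫ t in a..y, (f t).re) = (∫ t in a..y, f t).re := fun y hy => by
    have := Complex.reCLM.intervalIntegral_comp_comm (hsub y hy)
    simpa using this
  have eim : ∀ y ∈ Set.uIcc a b, (∫ t in a..y, (f t).im) = (∫ t in a..y, f t).im := fun y hy => by
    have := Complex.imCLM.intervalIntegral_comp_comm (hsub y hy)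
    simpa using this
  rw [ere _ hm.1, ere _ hm.2, eim _ hm.1, eim _ hm.2, dist_eq_norm, dist_eq_norm, dist_eq_norm]
  rw [← Complex.sub_re, ← Complex.sub_im]
  exact Complex.norm_le_abs_re_add_abs_im _

lemma aux_prim_mul {a b : ℝ} (hab : a ≤ b) {F G f h : ℝ → ℂ}
    (hf : IntervalIntegrable f volume a b) (hh : IntervalIntegrable h volume a b)
    (hF : ∀ x ∈ Set.Icc a b, F x = F a + ∫ t in a..x, f t)
    (hG : ∀ x ∈ Set.Icc a b, G x = G a + ∫ t in a..x, h t) :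
    ContinuousOn F (Set.Icc a b) ∧ ContinuousOn G (Set.Icc a b) ∧
    IntervalIntegrable (fun t => f t * G t + F t * h t) volume a b ∧
    ∀ x ∈ Set.Icc a b, F x * G x = F a * G a + ∫ t in a..x, (f t * G t + F t * h t) := by
  have acc : ∀ c : ℂ, AbsolutelyContinuousOnInterval (fun _ : ℝ => c) a b := by
    intro c
    simp [AbsolutelyContinuousOnInterval, tendsto_const_nhds]
  set F₁ : ℝ → ℂ := fun x => F a + ∫ t in a..x, f t with hF₁
  set G₁ : ℝ → ℂ := fun x => G a + ∫ t in a..x, h t with hG₁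
  have acF : AbsolutelyContinuousOnInterval F₁ a b := (acc (F a)).add (aux_ac hf)
  have acG : AbsolutelyContinuousOnInterval G₁ a b := (acc (G a)).add (aux_ac hh)
  have cF : ContinuousOn F (Set.Icc a b) := by
    have := acF.continuousOn
    rw [Set.uIcc_of_le hab] at this
    exact this.congr hF
  have cG : ContinuousOn G (Set.Icc a b) := by
    have := acG.continuousOn
    rw [Set.uIcc_of_le hab] at this
    exact this.congr hG
  have hI : IntervalIntegrable (fun t => f t * G t + F t * h t) volume a b :=
    (hf.mul_continuousOn (by rwa [Set.uIcc_of_le hab])).add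
      (hh.continuousOn_mul (by rwa [Set.uIcc_of_le hab]))
  refine ⟨cF, cG, hI, ?_⟩
  have acH : AbsolutelyContinuousOnInterval
      (fun x => F₁ x * G₁ x - ∫ t in a..x, (f t * G t + F t * h t)) a b :=
    (acF.smul acG).sub (aux_ac hI)
  obtain ⟨C, hC⟩ := acH.const_of_ae_hasDerivAt_zero (by
    filter_upwards [hf.ae_hasDerivAt_integral, hh.ae_hasDerivAt_integral,
      hI.ae_hasDerivAt_integral] with x h1 h2 h3 hx
    have k1 := (h1 hx a (by simp)).const_add (F a)
    have k2 := (h2 hx a (by simp)).const_add (G a)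
    have k3 := h3 hx a (by simp)
    have := (k1.mul k2).sub k3
    rw [Set.uIcc_of_le hab] at hx
    convert! this using 1
    rw [← hF x hx, ← hG x hx]
    ring)
  rw [Set.uIcc_of_le hab] at hC
  intro x hx
  have e1 := hC x hx
  have e2 := hC a ⟨le_rfl, hab⟩
  simp only [hF₁, hG₁, intervalIntegral.integral_same, add_zero, sub_zero] at e1 e2
  rw [← hF x hx, ← hG x hx] at e1
  rw [e2, ← e1]; ring

lemma aux_prim_conj {a b : ℝ} {F f : ℝ → ℂ}
    (hF : ∀ x ∈ Set.Icc a b, F x = F a + ∫ t in a..x, f t) :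
    ∀ x ∈ Set.Icc a b, (starRingEnd ℂ) (F x) = (starRingEnd ℂ) (F a)
      + ∫ t in a..x, (starRingEnd ℂ) (f t) := by
  intro x hx
  rw [hF x hx, map_add]
  congr 1
  simp only [intervalIntegral, map_sub, integral_conj]

/-- Final real arithmetic: the lower bound on `T`. -/
lemma aux_lower {M W L δ α J C T ε κ KK : ℝ} (hM : 0 < M) (hW : 0 < W) (hL : 0 ≤ L) (hε : 0 < ε)
    (hα : 0 ≤ α) (hJ : 0 ≤ J) (hδ : δ = 2 + 2 * L / W)
    (h1 : M ^ 2 * W ≤ L * (2 * C)) (h2 : C ^ 2 ≤ J * KK) (hKK : KK ≤ α * M ^ 2)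
    (hκ : κ ≤ 1 / (2 * α * δ ^ 2)) (hT : ε * J - ε * M ^ 2 * κ ≤ T) :
    0 < α ∧ 0 < δ ∧ M ^ 2 ≤ 2 / ε * α * δ ^ 2 * T := by
  have hδ0 : 0 < δ := by rw [hδ]; positivity
  have hD : 0 ≤ 2 * L / W := by positivity
  have hMC : M ^ 2 ≤ 2 * L / W * C := by
    rw [div_mul_eq_mul_div, le_div_iff₀ hW]; linarith
  have hC : C ^ 2 ≤ J * (α * M ^ 2) := h2.trans (mul_le_mul_of_nonneg_left hKK hJ)
  have hM4 : (M ^ 2) ^ 2 ≤ (2 * L / W) ^ 2 * (J * (α * M ^ 2)) := by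
    calc (M ^ 2) ^ 2 ≤ (2 * L / W * C) ^ 2 := by gcongr
      _ = (2 * L / W) ^ 2 * C ^ 2 := by ring
      _ ≤ _ := by gcongr
  have hM4' : (M ^ 2) ^ 2 ≤ δ ^ 2 * (J * (α * M ^ 2)) :=
    hM4.trans (by gcongr; linarith)
  have hM2 : 0 < M ^ 2 := by positivity
  have hmain : M ^ 2 ≤ δ ^ 2 * α * J := by
    by_contra hcon
    push Not at hcon
    nlinarith
  have hα0 : 0 < α := by
    rcases hα.eq_or_lt with h | h
    · rw [← h] at hmain; simp at hmain; nlinarith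
    · exact h
  refine ⟨hα0, hδ0, ?_⟩
  have hT2 : ε * J - ε * M ^ 2 * (1 / (2 * α * δ ^ 2)) ≤ T := by
    refine le_trans ?_ hT
    have : ε * M ^ 2 * κ ≤ ε * M ^ 2 * (1 / (2 * α * δ ^ 2)) := by gcongr
    linarith
  have : 2 / ε * α * δ ^ 2 * (ε * J - ε * M ^ 2 * (1 / (2 * α * δ ^ 2)))
      = 2 * (δ ^ 2 * α * J) - M ^ 2 := by
    field_simp
  have h3 : 2 / ε * α * δ ^ 2 * (ε * J - ε * M ^ 2 * (1 / (2 * α * δ ^ 2)))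
      ≤ 2 / ε * α * δ ^ 2 * T := by gcongr
  linarith

set_option maxHeartbeats 4000000 in
/-- Theorem 3.5 of the paper for separated self-adjoint boundary conditions:
bounds on the real and imaginary parts of non-real eigenvalues under the
additional assumption ∫ₐᵇ w ≠ 0. -/
theorem nonreal_eigenvalue_bounds_delta_separated
    (a b : ℝ) (hab : a < b) (p q w : ℝ → ℝ)
    (hpm : Measurable p) (hqm : Measurable q) (hwm : Measurable w)
    (hp_pos : ∀ᵐ x ∂(volume.restrict (Set.Ioc a b)), 0 < p x)
    (hp_int : IntegrableOn (fun x => 1 / p x) (Set.Ioc a b))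
    (hq_int : IntegrableOn q (Set.Ioc a b))
    (hw_int : IntegrableOn w (Set.Ioc a b))
    (hw_ne : ∀ᵐ x ∂(volume.restrict (Set.Ioc a b)), w x ≠ 0)
    (hw_pos : 0 < volume {x ∈ Set.Ioc a b | 0 < w x})
    (hw_neg : 0 < volume {x ∈ Set.Ioc a b | w x < 0})
    (hw0 : (∫ t in a..b, w t) ≠ 0)
    (δ : ℝ) (hδ : δ = 2 + 2 * (∫ t in a..b, |w t|) / |∫ t in a..b, w t|)
    (l r : ℝ) (α : ℝ)
    (hα : α = |l| + |r| + ∫ t in a..b, |min (q t) 0|)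
    -- the comparison function g, absolutely continuous with a.e. derivative g'
    (g g' : ℝ → ℝ) (hg'm : Measurable g')
    (hg'int : IntegrableOn g' (Set.Icc a b))
    (hgAC : ∀ x ∈ Set.Icc a b, g x = g a + ∫ t in a..x, g' t)
    (hga : g a = 0) (hgb : g b = 0)
    (hg'2 : IntegrableOn (fun t => p t * g' t ^ 2) (Set.Ioc a b))
    (hgw : ∀ᵐ x ∂(volume.restrict (Set.Ioc a b)), 0 < g x * w x)
    (ε : ℝ) (hε : 0 < ε)
    (hεcond : (volume.withDensity fun x => ENNReal.ofReal (1 / p x))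
        {x | x ∈ Set.Icc a b ∧ p x * g x * w x < ε}
          ≤ ENNReal.ofReal (1 / (2 * α * δ ^ 2))) :
    ∀ lam : ℂ, lam.im ≠ 0 →
      ∀ φ u : ℝ → ℂ,
        ContinuousOn φ (Set.Icc a b) → ContinuousOn u (Set.Icc a b) →
        (∀ x ∈ Set.Icc a b, φ x = φ a + ∫ t in a..x, u t / (p t : ℂ)) →
        (∀ x ∈ Set.Icc a b,
            u x = u a + ∫ t in a..x, ((q t : ℂ) - lam * (w t : ℂ)) * φ t) →
        (∃ x ∈ Set.Icc a b, φ x ≠ 0) →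
        u a = (l : ℂ) * φ a → u b = (r : ℂ) * φ b →
        |lam.im| ≤ 2 / ε * α ^ ((3 : ℝ) / 2) * δ ^ 2
            * Real.sqrt (∫ t in a..b, p t * g' t ^ 2)
          ∧ |lam.re| ≤ 2 / ε * α * δ ^ 2 *
              (Real.sqrt α * Real.sqrt (∫ t in a..b, p t * g' t ^ 2)
                + (α + ∫ t in a..b, |q t|)
                    * sSup ((fun x => |g x|) '' Set.Icc a b)) := by
  intro lam hlam φ u hφc huc hφ hu hne hua hub
  have hab' := hab.le
  have hIab : Set.uIcc a b = Set.Icc a b := Set.uIcc_of_le hab'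
  have haI : a ∈ Set.Icc a b := ⟨le_rfl, hab'⟩
  have hbI : b ∈ Set.Icc a b := ⟨hab', le_rfl⟩
  -- the maximum of |φ|
  obtain ⟨x0, hx0, hmax⟩ := isCompact_Icc.exists_isMaxOn ⟨a, haI⟩ hφc.norm
  set M : ℝ := ‖φ x0‖ with hMdef
  have hle : ∀ x ∈ Set.Icc a b, ‖φ x‖ ≤ M := fun x hx => hmax hx
  have hM : 0 < M := by
    obtain ⟨y, hy, hy0⟩ := hne
    exact (norm_pos_iff.2 hy0).trans_le (hle y hy)
  have hIocIcc : ∀ᵐ x ∂(volume.restrict (Set.Ioc a b)), x ∈ Set.Icc a b := by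
    filter_upwards [ae_restrict_mem measurableSet_Ioc] with x hx using Set.Ioc_subset_Icc_self hx
  -- interval integrability
  have ii : ∀ {f : ℝ → ℝ}, IntegrableOn f (Set.Ioc a b) → IntervalIntegrable f volume a b :=
    fun h => (intervalIntegrable_iff_integrableOn_Ioc_of_le hab').2 h
  have io : ∀ {f : ℝ → ℝ}, IntervalIntegrable f volume a b → IntegrableOn f (Set.Ioc a b) :=
    fun h => (intervalIntegrable_iff_integrableOn_Ioc_of_le hab').1 h
  have hpI := ii hp_int
  have hqI := ii hq_int
  have hwI := ii hw_int
  have hg'I : IntervalIntegrable g' volume a b := ii (hg'int.mono_set Set.Ioc_subset_Icc_self)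
  have hφu : ContinuousOn φ (Set.uIcc a b) := by rwa [hIab]
  have huu : ContinuousOn u (Set.uIcc a b) := by rwa [hIab]
  have ofR : ∀ {f : ℝ → ℝ}, IntervalIntegrable f volume a b →
      IntervalIntegrable (fun t => (f t : ℂ)) volume a b := fun h => ⟨h.1.ofReal, h.2.ofReal⟩
  have cj : ∀ {f : ℝ → ℂ}, IntervalIntegrable f volume a b →
      IntervalIntegrable (fun t => (starRingEnd ℂ) (f t)) volume a b := fun h => by
    have h1 := h.1.re
    have := Complex.conjCLE.toContinuousLinearMap.integrable_comp h.1
    have := Complex.conjCLE.toContinuousLinearMap.integrable_comp h.2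
    exact ⟨by assumption, by assumption⟩
  have hup : IntervalIntegrable (fun t => u t / (p t : ℂ)) volume a b := by
    have := (ofR hpI).continuousOn_mul huu
    refine this.congr ?_
    intro x _
    simp only []
    push_cast
    ring
  have hqw : IntervalIntegrable (fun t => ((q t : ℂ) - lam * (w t : ℂ)) * φ t) volume a b :=
    ((ofR hqI).sub ((ofR hwI).const_mul lam)).mul_continuousOn hφu
  -- real densities
  set N : ℝ → ℝ := fun t => ‖φ t‖ ^ 2 with hN
  set K : ℝ → ℝ := fun t => 1 / p t * ‖u t‖ ^ 2 with hK
  have hNc : ContinuousOn N (Set.uIcc a b) := hφu.norm.pow 2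
  have hNle : ∀ x ∈ Set.Icc a b, N x ≤ M ^ 2 := fun x hx =>
    pow_le_pow_left₀ (norm_nonneg _) (hle x hx) 2
  have hN0 : ∀ x, 0 ≤ N x := fun x => by positivity
  have hKI : IntervalIntegrable K volume a b := hpI.mul_continuousOn (huu.norm.pow 2)
  have hqN : IntervalIntegrable (fun t => q t * N t) volume a b := hqI.mul_continuousOn hNc
  have hwN : IntervalIntegrable (fun t => w t * N t) volume a b := hwI.mul_continuousOn hNc
  -- V = u conj φ
  obtain ⟨-, hcφ, hVI, hV⟩ := aux_prim_mul hab' hqw (cj hup) hu (aux_prim_conj hφ)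
  have hV'eq : ∀ t, ((q t : ℂ) - lam * (w t : ℂ)) * φ t * (starRingEnd ℂ) (φ t)
      + u t * (starRingEnd ℂ) (u t / (p t : ℂ))
      = ((q t * N t + K t : ℝ) : ℂ) - lam * ((w t * N t : ℝ) : ℂ) := by
    intro t
    have e1 : φ t * (starRingEnd ℂ) (φ t) = ((N t : ℝ) : ℂ) := by
      rw [Complex.mul_conj, Complex.normSq_eq_norm_sq]
    have e2 : u t * (starRingEnd ℂ) (u t / (p t : ℂ)) = ((K t : ℝ) : ℂ) := by
      rw [map_div₀, Complex.conj_ofReal, ← mul_div_assoc, Complex.mul_conj,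
        Complex.normSq_eq_norm_sq]
      simp only [hK]; push_cast; ring
    rw [mul_assoc, e1, e2]; push_cast; ring
  simp only [hV'eq] at hV hVI
  have hVb := hV b hbI
  rw [intervalIntegral.integral_sub (ofR (hqN.add hKI)) ((ofR hwN).const_mul lam),
    intervalIntegral.integral_const_mul, intervalIntegral.integral_ofReal,
    intervalIntegral.integral_ofReal, hua, hub, mul_assoc, mul_assoc, Complex.mul_conj,
    Complex.mul_conj, Complex.normSq_eq_norm_sq, Complex.normSq_eq_norm_sq] at hVb
  have hIm := congrArg Complex.im hVb
  have hRe := congrArg Complex.re hVb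
  simp only [← Complex.ofReal_mul, Complex.add_im, Complex.sub_im, Complex.ofReal_im,
    Complex.im_mul_ofReal, Complex.add_re, Complex.sub_re, Complex.ofReal_re,
    Complex.re_mul_ofReal, zero_add, zero_sub] at hIm hRe
  have hwN0 : (∫ t in a..b, w t * N t) = 0 := by
    have : lam.im * (∫ t in a..b, w t * N t) = 0 := by linarith
    exact (mul_eq_zero.1 this).resolve_left hlam
  rw [hwN0, intervalIntegral.integral_add hqN hKI] at hRe
  have hα0 : 0 ≤ α := by
    rw [hα]
    have : 0 ≤ ∫ t in a..b, |min (q t) 0| :=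
      intervalIntegral.integral_nonneg hab' (fun _ _ => abs_nonneg _)
    positivity
  have hq_I : IntervalIntegrable (fun t => |min (q t) 0|) volume a b := by
    apply ii
    have : IntegrableOn (fun t => min (q t) 0) (Set.Ioc a b) :=
      hq_int.inf (integrable_zero _ _ _)
    exact this.abs
  have hKle : (∫ t in a..b, K t) ≤ α * M ^ 2 := by
    have h1 : -(∫ t in a..b, q t * N t) ≤ (∫ t in a..b, |min (q t) 0|) * M ^ 2 := by
      rw [← intervalIntegral.integral_neg, ← intervalIntegral.integral_mul_const]
      apply intervalIntegral.integral_mono_on hab' hqN.neg (hq_I.mul_const _)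
      intro x hx
      have h2 := hNle x hx
      have h3 := hN0 x
      have h4 : -q x ≤ |min (q x) 0| := by
        rw [abs_of_nonpos (min_le_right _ _)]
        linarith [min_le_left (q x) 0]
      have h5 := abs_nonneg (min (q x) 0)
      change -(q x * N x) ≤ |min (q x) 0| * M ^ 2
      have h6 := mul_le_mul_of_nonneg_right h4 h3
      have h7 := mul_le_mul_of_nonneg_left h2 h5
      linarith
    have h2 : r * N b ≤ |r| * M ^ 2 :=
      mul_le_mul (le_abs_self r) (hNle b hbI) (hN0 b) (abs_nonneg r)
    have h3 : -l * N a ≤ |l| * M ^ 2 :=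
      mul_le_mul (neg_le_abs l) (hNle a haI) (hN0 a) (abs_nonneg l)
    rw [hα]
    simp only [hN] at h2 h3 h1 hRe
    nlinarith
  -- bound on M
  have hprimN := (aux_prim_mul hab' hup (cj hup) hφ (aux_prim_conj hφ)).2.2
  set R : ℝ → ℝ := fun t => 1 / p t * (‖φ t‖ * ‖u t‖) with hR
  have hRI : IntervalIntegrable R volume a b :=
    hpI.mul_continuousOn (hφu.norm.mul huu.norm)
  have hdiff : ∀ t ∈ Set.Icc a b, |N x0 - N t| ≤ 2 * ∫ t in a..b, R t := by
    intro t ht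
    obtain ⟨hI2, hP2⟩ := hprimN
    have e1 := hP2 x0 hx0
    have e2 := hP2 t ht
    have sub1 : ∀ y ∈ Set.Icc a b, IntervalIntegrable (fun t => u t / (p t : ℂ) * (starRingEnd ℂ) (φ t)
        + φ t * (starRingEnd ℂ) (u t / (p t : ℂ))) volume a y := fun y hy =>
      hI2.mono_set (Set.uIcc_subset_uIcc_left (by rwa [hIab]))
    have e3 : ((N x0 - N t : ℝ) : ℂ) = ∫ s in t..x0, (u s / (p s : ℂ) * (starRingEnd ℂ) (φ s)
        + φ s * (starRingEnd ℂ) (u s / (p s : ℂ))) := by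
      rw [← intervalIntegral.integral_interval_sub_left (sub1 x0 hx0) (sub1 t ht)]
      rw [Complex.mul_conj, Complex.normSq_eq_norm_sq] at e1 e2
      push_cast [hN]
      push_cast at e1 e2
      rw [e1, e2]; ring
    have hsub : Set.uIoc t x0 ⊆ Set.Ioc a b := by
      intro y hy
      rw [Set.uIoc, Set.mem_Ioc] at hy
      exact ⟨(le_min ht.1 hx0.1).trans_lt hy.1, hy.2.trans (max_le ht.2 hx0.2)⟩
    rw [← Real.norm_eq_abs, ← Complex.norm_real, e3]
    refine (intervalIntegral.norm_integral_le_integral_norm_uIoc).trans ?_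
    have hI2n := ((intervalIntegrable_iff_integrableOn_Ioc_of_le hab').1 hI2).norm
    refine (setIntegral_mono_set hI2n (Filter.Eventually.of_forall fun _ => norm_nonneg _)
      hsub.eventuallyLE).trans ?_
    rw [← intervalIntegral.integral_const_mul, intervalIntegral.integral_of_le hab']
    apply integral_mono_ae hI2n ((io hRI).const_mul 2)
    filter_upwards [hp_pos] with s hs
    refine (norm_add_le _ _).trans ?_
    simp only [norm_mul, norm_div, RCLike.norm_conj, Complex.norm_real, Real.norm_eq_abs,
      abs_of_pos hs, hR]
    apply le_of_eq
    ring
  set W : ℝ := |∫ t in a..b, w t| with hW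
  set L : ℝ := ∫ t in a..b, |w t| with hL
  have hWpos : 0 < W := abs_pos.2 hw0
  have hL0 : 0 ≤ L := intervalIntegral.integral_nonneg hab' (fun _ _ => abs_nonneg _)
  have h1 : M ^ 2 * W ≤ L * (2 * ∫ t in a..b, R t) := by
    have e : (∫ t in a..b, w t) * M ^ 2 = ∫ t in a..b, w t * (N x0 - N t) := by
      have : (fun t => w t * (N x0 - N t)) = fun t => w t * M ^ 2 - w t * N t := by
        ext t; simp only [hN, hMdef]; ring
      rw [this, intervalIntegral.integral_sub (hwI.mul_const _) hwN,
        intervalIntegral.integral_mul_const, hwN0, sub_zero]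
    have : M ^ 2 * W = |∫ t in a..b, w t * (N x0 - N t)| := by
      rw [← e, abs_mul, abs_of_nonneg (sq_nonneg M), mul_comm]
    rw [this, hL, ← intervalIntegral.integral_mul_const]
    refine (intervalIntegral.abs_integral_le_integral_abs hab').trans ?_
    apply intervalIntegral.integral_mono_on hab'
    · exact (hwI.mul_continuousOn (continuousOn_const.sub hNc)).abs
    · exact hwI.abs.mul_const _
    · intro x hx
      rw [abs_mul]
      exact mul_le_mul_of_nonneg_left (hdiff x hx) (abs_nonneg _)
  set J : ℝ := ∫ t in a..b, 1 / p t * N t with hJ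
  have hJI : IntervalIntegrable (fun t => 1 / p t * N t) volume a b := hpI.mul_continuousOn hNc
  have hJ0 : 0 ≤ J := by
    rw [hJ, intervalIntegral.integral_of_le hab']
    apply integral_nonneg_of_ae
    filter_upwards [hp_pos] with x hx
    have := hN0 x
    simp only [Pi.zero_apply]; positivity
  have h2 : (∫ t in a..b, R t) ^ 2 ≤ J * ∫ t in a..b, K t := by
    rw [hJ]
    simp only [intervalIntegral.integral_of_le hab']
    apply aux_cs (io hJI) (io hKI) (io hRI)
    filter_upwards [hp_pos] with x hx
    have := hN0 x
    refine ⟨by positivity, by positivity, le_of_eq ?_⟩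
    simp only [hR, hK, hN]; ring
  -- g
  have hgp : ∀ x ∈ Set.Icc a b, ((g x : ℝ) : ℂ) = ((g a : ℝ) : ℂ) + ∫ t in a..x, ((g' t : ℝ) : ℂ) := by
    intro x hx
    rw [intervalIntegral.integral_ofReal, hgAC x hx]; push_cast; rfl
  obtain ⟨hVc, hgC, hVgI, hVg⟩ := aux_prim_mul hab' hVI (ofR hg'I) hV hgp
  have hgc : ContinuousOn g (Set.Icc a b) := by
    have := Complex.continuous_re.comp_continuousOn hgC
    simpa [Function.comp_def] using this
  have hgu : ContinuousOn g (Set.uIcc a b) := by rwa [hIab]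
  set Gs : ℝ := sSup ((fun x => |g x|) '' Set.Icc a b) with hGs
  have hgle : ∀ x ∈ Set.Icc a b, |g x| ≤ Gs := fun x hx =>
    le_csSup (isCompact_Icc.image_of_continuousOn hgc.abs).bddAbove ⟨x, hx, rfl⟩
  have hgw_I : IntervalIntegrable (fun t => g t * (w t * N t)) volume a b :=
    hwN.continuousOn_mul hgu
  have hgS_I : IntervalIntegrable (fun t => g t * (q t * N t + K t)) volume a b :=
    (hqN.add hKI).continuousOn_mul hgu
  set T : ℝ := ∫ t in a..b, g t * (w t * N t) with hT
  set S : ℝ := ∫ t in a..b, g t * (q t * N t + K t) with hS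
  set Z : ℂ := ∫ t in a..b, u t * (starRingEnd ℂ) (φ t) * (g' t : ℂ) with hZ
  have hVu : ContinuousOn (fun t => u t * (starRingEnd ℂ) (φ t)) (Set.uIcc a b) := by rwa [hIab]
  have hZI : IntervalIntegrable (fun t => u t * (starRingEnd ℂ) (φ t) * (g' t : ℂ)) volume a b :=
    (ofR hg'I).continuousOn_mul hVu
  have hTSZ : lam * (T : ℂ) = (S : ℂ) + Z := by
    have := hVg b hbI
    rw [hga, hgb] at this
    have e : (fun t => (((q t * N t + K t : ℝ) : ℂ) - lam * ((w t * N t : ℝ) : ℂ)) * (g t : ℂ)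
        + u t * (starRingEnd ℂ) (φ t) * (g' t : ℂ))
        = fun t => (((g t * (q t * N t + K t) : ℝ) : ℂ) - lam * ((g t * (w t * N t) : ℝ) : ℂ))
        + u t * (starRingEnd ℂ) (φ t) * (g' t : ℂ) := by
      ext t; push_cast; ring
    rw [e, intervalIntegral.integral_add ((ofR hgS_I).sub ((ofR hgw_I).const_mul lam)) hZI,
      intervalIntegral.integral_sub (ofR hgS_I) ((ofR hgw_I).const_mul lam),
      intervalIntegral.integral_const_mul, intervalIntegral.integral_ofReal,
      intervalIntegral.integral_ofReal] at this
    rw [hT, hS, hZ]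
    simp only [Complex.ofReal_zero, mul_zero, zero_add] at this
    linear_combination this
  have hTim := congrArg Complex.im hTSZ
  have hTre := congrArg Complex.re hTSZ
  simp only [Complex.im_mul_ofReal, Complex.re_mul_ofReal, Complex.add_im, Complex.add_re,
    Complex.ofReal_im, Complex.ofReal_re, zero_add] at hTim hTre
  -- bound on Z
  set P : ℝ := ∫ t in a..b, p t * g' t ^ 2 with hP
  have hQI : IntervalIntegrable (fun t => ‖u t‖ * |g' t|) volume a b :=
    hg'I.abs.continuousOn_mul huu.norm
  have hP0 : 0 ≤ P := by
    rw [hP, intervalIntegral.integral_of_le hab']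
    apply integral_nonneg_of_ae
    filter_upwards [hp_pos] with x hx
    simp only [Pi.zero_apply]; positivity
  have hQ : (∫ t in a..b, ‖u t‖ * |g' t|) ≤ M * (Real.sqrt α * Real.sqrt P) := by
    have h3 : (∫ t in a..b, ‖u t‖ * |g' t|) ^ 2 ≤ (∫ t in a..b, K t) * P := by
      rw [hP]
      simp only [intervalIntegral.integral_of_le hab']
      apply aux_cs (io hKI) hg'2 (io hQI)
      filter_upwards [hp_pos] with x hx
      refine ⟨by positivity, by positivity, le_of_eq ?_⟩
      simp only [hK]
      rw [mul_pow, sq_abs]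
      field_simp
    refine abs_le_of_sq_le_sq' ?_ (by positivity) |>.2
    calc _ ≤ (∫ t in a..b, K t) * P := h3
      _ ≤ α * M ^ 2 * P := mul_le_mul_of_nonneg_right hKle hP0
      _ = _ := by rw [mul_pow, mul_pow, Real.sq_sqrt hα0, Real.sq_sqrt hP0]; ring
  have hZle : ‖Z‖ ≤ M ^ 2 * (Real.sqrt α * Real.sqrt P) := by
    have : ‖Z‖ ≤ ∫ t in a..b, M * (‖u t‖ * |g' t|) := by
      refine (intervalIntegral.norm_integral_le_integral_norm hab').trans ?_
      apply intervalIntegral.integral_mono_on hab' hZI.norm (hQI.const_mul M)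
      intro x hx
      simp only [norm_mul, RCLike.norm_conj, Complex.norm_real, Real.norm_eq_abs]
      have := hle x hx
      calc ‖u x‖ * ‖φ x‖ * |g' x| ≤ ‖u x‖ * M * |g' x| := by gcongr
        _ = _ := by ring
    rw [intervalIntegral.integral_const_mul] at this
    calc ‖Z‖ ≤ _ := this
      _ ≤ M * (M * (Real.sqrt α * Real.sqrt P)) := mul_le_mul_of_nonneg_left hQ hM.le
      _ = _ := by ring
  have hGs0 : 0 ≤ Gs := (abs_nonneg _).trans (hgle a haI)
  -- bound on S
  have hSle : |S| ≤ M ^ 2 * ((α + ∫ t in a..b, |q t|) * Gs) := by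
    have : |S| ≤ ∫ t in a..b, (Gs * M ^ 2 * |q t| + Gs * K t) := by
      rw [hS]
      refine (intervalIntegral.abs_integral_le_integral_abs hab').trans ?_
      rw [intervalIntegral.integral_of_le hab', intervalIntegral.integral_of_le hab']
      apply integral_mono_ae (io hgS_I.abs)
        (io ((hqI.abs.const_mul _).add (hKI.const_mul _)))
      filter_upwards [hp_pos, hIocIcc] with x hx hxI
      have hKx : 0 ≤ K x := by simp only [hK]; positivity
      have h5 := hgle x hxI
      have h6 := hNle x hxI
      have h7 := hN0 x
      calc |g x * (q x * N x + K x)| = |g x| * |q x * N x + K x| := abs_mul _ _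
        _ ≤ Gs * (|q x| * M ^ 2 + K x) := by
          apply mul_le_mul h5 _ (abs_nonneg _) hGs0
          refine (abs_add_le _ _).trans ?_
          rw [abs_mul, abs_of_nonneg h7, abs_of_nonneg hKx]
          gcongr
        _ = _ := by ring
    rw [intervalIntegral.integral_add (hqI.abs.const_mul _) (hKI.const_mul _),
      intervalIntegral.integral_const_mul, intervalIntegral.integral_const_mul] at this
    have := mul_le_mul_of_nonneg_left hKle hGs0
    nlinarith
  -- lower bound on T
  set E : Set ℝ := {x | x ∈ Set.Icc a b ∧ p x * g x * w x < ε} with hE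
  have hEm : MeasurableSet E := by
    classical
    have hgm : Measurable (Set.piecewise (Set.Icc a b) g (fun _ => 0)) :=
      hgc.measurable_piecewise continuousOn_const measurableSet_Icc
    have : E = Set.Icc a b ∩
        {x | p x * (Set.piecewise (Set.Icc a b) g (fun _ => 0)) x * w x < ε} := by
      ext x
      simp only [hE, Set.mem_inter_iff, Set.mem_ofPred_eq]
      refine and_congr_right fun hx => ?_
      rw [Set.piecewise_eq_of_mem _ _ _ hx]
    rw [this]
    exact measurableSet_Icc.inter
      (measurableSet_lt ((hpm.mul hgm).mul hwm) measurable_const)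
  have hEI : Integrable (E.indicator fun x => 1 / p x) (volume.restrict (Set.Ioc a b)) :=
    hp_int.indicator hEm
  set κ : ℝ := ∫ x in Set.Ioc a b, E.indicator (fun x => 1 / p x) x with hκ
  have hκle : κ ≤ 1 / (2 * α * δ ^ 2) := by
    have h0 : (0 : ℝ) ≤ 1 / (2 * α * δ ^ 2) := by positivity
    rw [hκ, integral_eq_lintegral_of_nonneg_ae _ hEI.aestronglyMeasurable]
    · apply ENNReal.toReal_le_of_le_ofReal h0
      refine le_trans ?_ hεcond
      rw [withDensity_apply _ hEm, ← lintegral_indicator hEm]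
      refine le_trans (setLIntegral_le_lintegral _ _) ?_
      apply lintegral_mono
      intro x
      by_cases hx : x ∈ E <;> simp [hx]
    · filter_upwards [hp_pos] with x hx
      by_cases hxE : x ∈ E
      · simp only [Set.indicator_of_mem hxE, Pi.zero_apply]; positivity
      · simp only [Set.indicator_of_notMem hxE, Pi.zero_apply]; exact le_rfl
  have hTlow : ε * J - ε * M ^ 2 * κ ≤ T := by
    rw [hJ, hκ, hT, intervalIntegral.integral_of_le hab', intervalIntegral.integral_of_le hab',
      ← integral_const_mul, ← integral_const_mul,
      ← integral_sub ((io hJI).const_mul _) (hEI.const_mul _)]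
    apply integral_mono_ae (((io hJI).const_mul _).sub (hEI.const_mul _)) (io hgw_I)
    filter_upwards [hp_pos, hIocIcc, hgw] with x hx hxI hgx
    have h6 := hNle x hxI
    have h7 := hN0 x
    change ε * (1 / p x * N x) - ε * M ^ 2 * E.indicator (fun x => 1 / p x) x ≤ g x * (w x * N x)
    by_cases hxE : x ∈ E
    · rw [Set.indicator_of_mem hxE]
      have : 0 ≤ g x * w x * N x := by positivity
      have : ε * (1 / p x) * N x ≤ ε * (1 / p x) * M ^ 2 := by gcongr
      nlinarith
    · rw [Set.indicator_of_notMem hxE]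
      have h8 : ε ≤ p x * g x * w x := by
        by_contra hcon
        exact hxE ⟨hxI, not_le.1 hcon⟩
      have h9 : ε * (1 / p x) ≤ g x * w x := by
        rw [mul_one_div, div_le_iff₀ hx]; linarith
      have := mul_le_mul_of_nonneg_right h9 h7
      linarith
  obtain ⟨hαp, hδp, hfin⟩ := aux_lower hM hWpos hL0 hε hα0 hJ0 hδ h1 h2 hKle hκle hTlow
  have hM2 : 0 < M ^ 2 := by positivity
  have hcoef : 0 < 2 / ε * α * δ ^ 2 := by positivity
  have hTpos : 0 < T := by
    by_contra hcon
    have := mul_nonpos_of_nonneg_of_nonpos hcoef.le (not_lt.1 hcon)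
    linarith
  have fin : ∀ y X : ℝ, 0 ≤ X → |y| * T ≤ M ^ 2 * X → |y| ≤ 2 / ε * α * δ ^ 2 * X := by
    intro y X hX hy
    have : |y| * T ≤ 2 / ε * α * δ ^ 2 * X * T := by
      calc |y| * T ≤ M ^ 2 * X := hy
        _ ≤ 2 / ε * α * δ ^ 2 * T * X := mul_le_mul_of_nonneg_right hfin hX
        _ = _ := by ring
    exact le_of_mul_le_mul_right this hTpos
  have hq0 : 0 ≤ ∫ t in a..b, |q t| :=
    intervalIntegral.integral_nonneg hab' (fun _ _ => abs_nonneg _)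
  constructor
  · have := fin lam.im (Real.sqrt α * Real.sqrt P) (by positivity) (by
      rw [← abs_of_pos hTpos, ← abs_mul, hTim]
      exact (Complex.abs_im_le_norm Z).trans hZle)
    refine this.trans (le_of_eq ?_)
    have : α ^ ((3 : ℝ) / 2) = α * Real.sqrt α := by
      rw [Real.sqrt_eq_rpow, show (3 : ℝ) / 2 = 1 + 1 / 2 by norm_num, Real.rpow_add hαp,
        Real.rpow_one]
    rw [this]; ring
  · apply fin lam.re _ (by positivity)
    rw [← abs_of_pos hTpos, ← abs_mul, hTre]
    refine (abs_add_le _ _).trans ?_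
    have := (Complex.abs_re_le_norm Z).trans hZle
    rw [mul_add]
    linarith
end

section
/- Assume p = 1 a.e. and that w has exactly n turning points in (a,b). Fix l, r ∈ ℝ and let α, β, γ be built from c := |l| + |r| (with ‖1/p‖_{L¹} = b − a). Let ε > 0 satisfy μ₁({x ∈ (a,b) : |w(x)| < ε}) ≤ 1/(4γ²), where μ₁ is Lebesgue measure. Then every λ ∈ ℂ with Im λ ≠ 0 for which there exists a solution (φ, u) of −φ'' + qφ = λwφ with φ not identically zero and u(a) = l·φ(a), u(b) = r·φ(b), satisfies |Im λ| ≤ (8/ε)·β·γ²·(n+1) and |Re λ| ≤ (2/ε)·(4βγ²(n+1) + β² + γ²‖q‖_{L¹}). -/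
open MeasureTheory Real Complex

lemma ac_of_prim {F f : ℝ → ℝ} {p q : ℝ} (hpq : p ≤ q)
    (hf : IntervalIntegrable f volume p q)
    (hF : ∀ y ∈ Set.Icc p q, F y = F p + ∫ t in p..y, f t) :
    AbsolutelyContinuousOnInterval F p q ∧
      ∀ᵐ t, t ∈ Set.uIoc p q → deriv F t = f t := by
  have h1 : AbsolutelyContinuousOnInterval (fun y => F p + ∫ t in p..y, f t) p q := by
    have h2 : AbsolutelyContinuousOnInterval (fun _ : ℝ => F p) p q :=
      (LipschitzOnWith.absolutelyContinuousOnInterval (K := 0)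
        (LipschitzWith.const (F p)).lipschitzOnWith)
    exact h2.fun_add (hf.absolutelyContinuousOnInterval_intervalIntegral (c := p) Set.left_mem_uIcc)
  constructor
  · rw [absolutelyContinuousOnInterval_iff] at h1 ⊢
    intro ε hε
    obtain ⟨δ, hδ, h⟩ := h1 ε hε
    refine ⟨δ, hδ, fun E hE hd => ?_⟩
    have h3 := h E hE hd
    convert h3 using 1
    apply Finset.sum_congr rfl
    intro i hi
    have h4 := hE.1 i hi
    rw [Set.uIcc_of_le hpq] at h4
    rw [hF _ h4.1, hF _ h4.2]
  · have e1 : ∀ᵐ t : ℝ, t ≠ q := by simp [ae_iff, measure_singleton]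
    filter_upwards [hf.ae_hasDerivAt_integral, e1] with t ht htq hmem
    rw [Set.uIoc_of_le hpq] at hmem
    have hI : t ∈ Set.Ioo p q := ⟨hmem.1, lt_of_le_of_ne hmem.2 htq⟩
    have h5 := ht (by rw [Set.uIcc_of_le hpq]; exact ⟨hI.1.le, hI.2.le⟩) p Set.left_mem_uIcc
    have h6 := (h5.const_add (F p))
    have h7 : HasDerivAt F (f t) t := by
      refine h6.congr_of_eventuallyEq ?_
      filter_upwards [Ioo_mem_nhds hI.1 hI.2] with y hy
      exact hF y ⟨hy.1.le, hy.2.le⟩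
    exact h7.deriv

lemma prim_sub {F f : ℝ → ℝ} {a b p q : ℝ} (hap : a ≤ p) (hpq : p ≤ q) (hqb : q ≤ b)
    (hf : IntervalIntegrable f volume a b)
    (hF : ∀ y ∈ Set.Icc a b, F y = F a + ∫ t in a..y, f t) :
    ∀ y ∈ Set.Icc p q, F y = F p + ∫ t in p..y, f t := by
  intro y hy
  have hi : ∀ c d, a ≤ c → c ≤ d → d ≤ b → IntervalIntegrable f volume c d := fun c d h1 h2 h3 => by
    apply hf.mono_set
    rw [Set.uIcc_of_le h2, Set.uIcc_of_le (by linarith)]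
    exact Set.Icc_subset_Icc h1 h3
  rw [hF y ⟨hap.trans hy.1, hy.2.trans hqb⟩, hF p ⟨hap, hpq.trans hqb⟩,
    ← intervalIntegral.integral_add_adjacent_intervals (hi a p le_rfl hap (hpq.trans hqb))
      (hi p y hap hy.1 (hy.2.trans hqb))]
  ring

lemma prod_real {F f G g : ℝ → ℝ} {p q : ℝ} (hpq : p ≤ q)
    (hf : IntervalIntegrable f volume p q) (hg : IntervalIntegrable g volume p q)
    (hF : ∀ y ∈ Set.Icc p q, F y = F p + ∫ t in p..y, f t)
    (hG : ∀ y ∈ Set.Icc p q, G y = G p + ∫ t in p..y, g t) :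
    ∫ t in p..q, (f t * G t + F t * g t) = F q * G q - F p * G p := by
  obtain ⟨aF, dF⟩ := ac_of_prim hpq hf hF
  obtain ⟨aG, dG⟩ := ac_of_prim hpq hg hG
  rw [← AbsolutelyContinuousOnInterval.integral_deriv_mul_eq_sub aF aG]
  apply intervalIntegral.integral_congr_ae
  filter_upwards [dF, dG] with t h1 h2 h3
  rw [h1 h3, h2 h3]

/-- product primitive on all of [a,b] -/
lemma prod_prim {F f G g : ℝ → ℝ} {a b : ℝ}
    (hf : IntervalIntegrable f volume a b) (hg : IntervalIntegrable g volume a b)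
    (hF : ∀ y ∈ Set.Icc a b, F y = F a + ∫ t in a..y, f t)
    (hG : ∀ y ∈ Set.Icc a b, G y = G a + ∫ t in a..y, g t) :
    ∀ y ∈ Set.Icc a b, F y * G y = F a * G a + ∫ t in a..y, (f t * G t + F t * g t) := by
  intro y hy
  have hm : ∀ k : ℝ → ℝ, IntervalIntegrable k volume a b → IntervalIntegrable k volume a y := fun k h => by
    apply h.mono_set
    rw [Set.uIcc_of_le hy.1, Set.uIcc_of_le (hy.1.trans hy.2)]
    exact Set.Icc_subset_Icc le_rfl hy.2
  rw [prod_real hy.1 (hm f hf) (hm g hg) (fun z hz => hF z ⟨hz.1, hz.2.trans hy.2⟩)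
    (fun z hz => hG z ⟨hz.1, hz.2.trans hy.2⟩)]
  ring

lemma ramp_int {M p q : ℝ} (hM : 0 < M) (hpq : p ≤ q) :
    ∫ t in p..q, max 0 (1 - M * (t - p)) ≤ 1 / (2 * M) := by
  have hc : Continuous (fun t : ℝ => max 0 (1 - M * (t - p))) := by fun_prop
  have key : ∀ m, p ≤ m → m ≤ p + 1 / M →
      ∫ t in p..m, max 0 (1 - M * (t - p)) ≤ 1 / (2 * M) := by
    intro m h1 h2
    have h3 : ∫ t in p..m, max 0 (1 - M * (t - p)) = ∫ t in p..m, ((1 + M * p) - M * t) := by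
      apply intervalIntegral.integral_congr
      intro t ht
      rw [Set.uIcc_of_le h1] at ht
      simp only
      have h3 : t - p ≤ 1 / M := by linarith [ht.2]
      have := mul_le_mul_of_nonneg_left h3 hM.le
      rw [mul_one_div_cancel hM.ne'] at this
      rw [max_eq_right (by linarith)]
      ring
    rw [h3, intervalIntegral.integral_sub (Continuous.intervalIntegrable (by fun_prop) _ _)
      (Continuous.intervalIntegrable (by fun_prop) _ _)]
    rw [intervalIntegral.integral_const, intervalIntegral.integral_const_mul, integral_id, smul_eq_mul,
      le_div_iff₀ (by positivity)]
    nlinarith [sq_nonneg (1 - M * (m - p))]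
  rcases le_total q (p + 1 / M) with h | h
  · exact key q hpq h
  · have hpm : p ≤ p + 1 / M := by
      have : 0 < 1 / M := by positivity
      linarith
    rw [← intervalIntegral.integral_add_adjacent_intervals (b := p + 1 / M)
      (hc.intervalIntegrable _ _) (hc.intervalIntegrable _ _)]
    have h2 : ∫ t in (p + 1 / M)..q, max 0 (1 - M * (t - p)) = 0 := by
      rw [intervalIntegral.integral_congr (g := fun _ => (0:ℝ))]
      · simp
      · intro t ht
        rw [Set.uIcc_of_le h] at ht
        simp only
        apply max_eq_left
        have h3 : 1 / M ≤ t - p := by linarith [ht.1]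
        have := mul_le_mul_of_nonneg_left h3 hM.le
        rw [mul_one_div_cancel hM.ne'] at this
        linarith
    rw [h2, add_zero]
    exact key _ hpm le_rfl

/-- the cut-off function -/
noncomputable def hat (M p q : ℝ) (t : ℝ) : ℝ := max 0 (min 1 (min (M * (t - p)) (M * (q - t))))

lemma hat_nonneg (M p q t : ℝ) : 0 ≤ hat M p q t := le_max_left _ _
lemma hat_le_one (M p q t : ℝ) : hat M p q t ≤ 1 := max_le zero_le_one (min_le_left _ _)
lemma hat_left (M p q : ℝ) : hat M p q p = 0 := by
  unfold hat; apply max_eq_left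
  exact (min_le_right _ _).trans ((min_le_left _ _).trans (by simp))
lemma hat_right (M p q : ℝ) : hat M p q q = 0 := by
  unfold hat; apply max_eq_left
  exact (min_le_right _ _).trans ((min_le_right _ _).trans (by simp))

lemma hat_lip {M : ℝ} (hM : 0 < M) (p q : ℝ) : LipschitzWith M.toNNReal (hat M p q) := by
  apply LipschitzWith.of_dist_le_mul
  intro s t
  rw [Real.coe_toNNReal _ hM.le, Real.dist_eq, Real.dist_eq]
  unfold hat
  have e : M * |s - t| = |M * s - M * t| := by rw [← mul_sub, abs_mul, abs_of_pos hM]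
  rw [e]
  refine (abs_max_sub_max_le_max _ _ _ _).trans (max_le (by simp) ?_)
  refine (abs_min_sub_min_le_max _ _ _ _).trans (max_le (by simp) ?_)
  refine (abs_min_sub_min_le_max _ _ _ _).trans (max_le (le_of_eq ?_) (le_of_eq ?_))
  · congr 1; ring
  · rw [abs_sub_comm]; congr 1; ring

lemma hat_int {M p q : ℝ} (hM : 0 < M) (hpq : p ≤ q) :
    ∫ t in p..q, (1 - hat M p q t) ≤ 1 / M := by
  have c0 : Continuous (hat M p q) := (hat_lip hM p q).continuous
  have c1 : Continuous (fun t : ℝ => max 0 (1 - M * (t - p))) := by fun_prop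
  have c2 : Continuous (fun t : ℝ => max 0 (1 - M * (q - t))) := by fun_prop
  have h1 : ∫ t in p..q, (1 - hat M p q t) ≤
      ∫ t in p..q, (max 0 (1 - M * (t - p)) + max 0 (1 - M * (q - t))) := by
    apply intervalIntegral.integral_mono_on hpq
    · exact (continuous_const.sub c0).intervalIntegrable _ _
    · exact (c1.add c2).intervalIntegrable _ _
    · intro t ht
      unfold hat
      have : min 1 (min (M * (t - p)) (M * (q - t))) ≤
        max 0 (min 1 (min (M * (t - p)) (M * (q - t)))) := le_max_right _ _
      have a1 := le_max_left 0 (1 - M * (t - p))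
      have a2 := le_max_right 0 (1 - M * (t - p))
      have a3 := le_max_left 0 (1 - M * (q - t))
      have a4 := le_max_right 0 (1 - M * (q - t))
      rcases min_choice 1 (min (M * (t - p)) (M * (q - t))) with h | h
      · linarith
      · rcases min_choice (M * (t - p)) (M * (q - t)) with h' | h' <;> linarith
  rw [intervalIntegral.integral_add (c1.intervalIntegrable _ _) (c2.intervalIntegrable _ _)] at h1
  have h2 := ramp_int hM hpq
  have h3 : ∫ t in p..q, max 0 (1 - M * (q - t)) = ∫ t in p..q, max 0 (1 - M * (t - p)) := by
    have := intervalIntegral.integral_comp_sub_left (a := p) (b := q)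
      (fun t => max 0 (1 - M * (t - p))) (p + q)
    rw [show p + q - q = p by ring, show p + q - p = q by ring] at this
    rw [← this]
    congr 1; ext t; congr 2; ring
  rw [h3] at h1
  have : 1 / (2 * M) + 1 / (2 * M) = 1 / M := by field_simp; norm_num
  linarith

/-- integration by parts against the cut-off function -/
lemma hat_parts {F f : ℝ → ℝ} {M p q : ℝ} (hM : 0 < M) (hpq : p ≤ q)
    (hf : IntervalIntegrable f volume p q)
    (hF : ∀ y ∈ Set.Icc p q, F y = F p + ∫ t in p..y, f t) :
    |∫ t in p..q, hat M p q t * f t| ≤ M * ∫ t in p..q, |F t| := by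
  obtain ⟨aF, dF⟩ := ac_of_prim hpq hf hF
  have aH : AbsolutelyContinuousOnInterval (hat M p q) p q :=
    (hat_lip hM p q).lipschitzOnWith.absolutelyContinuousOnInterval
  have h1 := AbsolutelyContinuousOnInterval.integral_mul_deriv_eq_deriv_mul aH aF
  have h2 : ∫ t in p..q, hat M p q t * f t = ∫ t in p..q, hat M p q t * deriv F t := by
    apply intervalIntegral.integral_congr_ae
    filter_upwards [dF] with t h1 h3
    rw [h1 h3]
  rw [h2, h1, hat_left, hat_right, zero_mul, zero_mul, sub_zero, zero_sub, abs_neg,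
    ← intervalIntegral.integral_const_mul]
  refine (intervalIntegral.abs_integral_le_integral_abs hpq).trans ?_
  apply intervalIntegral.integral_mono_on hpq
  · exact (aH.intervalIntegrable_deriv.mul_continuousOn aF.continuousOn).abs
  · exact (aF.continuousOn.abs.intervalIntegrable).const_mul M
  · intro t ht
    rw [abs_mul]
    apply mul_le_mul_of_nonneg_right _ (abs_nonneg _)
    have := norm_deriv_le_of_lipschitz (x₀ := t) (hat_lip hM p q)
    rwa [Real.coe_toNNReal _ hM.le] at this
lemma piece {a b p q' ρ η M ε S σ : ℝ} {q w A U P1 P2 : ℝ → ℝ}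
    (hap : a ≤ p) (hpq : p ≤ q') (hqb : q' ≤ b) (hM : 0 < M) (hε : 0 < ε) (hS : 0 ≤ S)
    (hσ : σ = 1 ∨ σ = -1) (hwm : Measurable w)
    (hq : IntervalIntegrable q volume a b) (hw : IntervalIntegrable w volume a b)
    (hA : ContinuousOn A (Set.Icc a b)) (hU : ContinuousOn U (Set.Icc a b))
    (hP1 : ContinuousOn P1 (Set.Icc a b)) (hP2 : ContinuousOn P2 (Set.Icc a b))
    (hA0 : ∀ t, 0 ≤ A t) (hU0 : ∀ t, 0 ≤ U t)
    (hAS : ∀ t ∈ Set.Icc a b, A t ≤ S)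
    (hP1p : ∀ y ∈ Set.Icc a b, P1 y = P1 a + ∫ t in a..y, (U t + q t * A t - ρ * (w t * A t)))
    (hP2p : ∀ y ∈ Set.Icc a b, P2 y = P2 a + ∫ t in a..y, (-η) * (w t * A t))
    (hP1A : ∀ t, |P1 t| ≤ √(A t) * √(U t)) (hP2A : ∀ t, |P2 t| ≤ √(A t) * √(U t))
    (hsign : ∀ᵐ t ∂(volume.restrict (Set.Ioo p q')), 0 < σ * w t) :
    ∃ J : ℝ, |η| * J ≤ M * ∫ t in p..q', √(A t) * √(U t) ∧
      |ρ| * J ≤ (∫ t in p..q', U t) + (∫ t in p..q', |q t| * A t) +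
          M * ∫ t in p..q', √(A t) * √(U t) ∧
      ε * ((∫ t in p..q', A t) - S * (∫ t in p..q', {t | |w t| < ε}.indicator 1 t) - S / M) ≤ J := by
  have hab : a ≤ b := by linarith
  have hsub : Set.Icc p q' ⊆ Set.Icc a b := Set.Icc_subset_Icc hap hqb
  have hsubu : Set.uIcc p q' ⊆ Set.uIcc a b := by
    rw [Set.uIcc_of_le hpq, Set.uIcc_of_le hab]; exact hsub
  have hσa : |σ| = 1 := by rcases hσ with h | h <;> simp [h]
  have up : Set.uIcc p q' = Set.Icc p q' := Set.uIcc_of_le hpq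
  have ub : Set.uIcc a b = Set.Icc a b := Set.uIcc_of_le hab
  have cA : ContinuousOn A (Set.uIcc p q') := by rw [up]; exact hA.mono hsub
  have cU : ContinuousOn U (Set.uIcc p q') := by rw [up]; exact hU.mono hsub
  have cP1 : ContinuousOn P1 (Set.uIcc p q') := by rw [up]; exact hP1.mono hsub
  have cP2 : ContinuousOn P2 (Set.uIcc p q') := by rw [up]; exact hP2.mono hsub
  have cR : ContinuousOn (fun t => √(A t) * √(U t)) (Set.uIcc p q') := cA.sqrt.mul cU.sqrt
  have cH : Continuous (hat M p q') := (hat_lip hM p q').continuous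
  have iwA0 : IntervalIntegrable (fun t => w t * A t) volume a b :=
    hw.mul_continuousOn (by rwa [ub])
  have iqA0 : IntervalIntegrable (fun t => q t * A t) volume a b :=
    hq.mul_continuousOn (by rwa [ub])
  have iU0 : IntervalIntegrable U volume a b := ContinuousOn.intervalIntegrable (by rwa [ub])
  have iwA := iwA0.mono_set hsubu
  have iqA := iqA0.mono_set hsubu
  have iU := iU0.mono_set hsubu
  have iA : IntervalIntegrable A volume p q' := cA.intervalIntegrable
  have iR : IntervalIntegrable (fun t => √(A t) * √(U t)) volume p q' := cR.intervalIntegrable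
  have iabs : IntervalIntegrable (fun t => |q t| * A t) volume p q' := by
    have := (hq.mono_set hsubu).abs.mul_continuousOn cA
    exact this
  have cHo : ContinuousOn (hat M p q') (Set.uIcc p q') := cH.continuousOn
  have iHwA : IntervalIntegrable (fun t => hat M p q' t * (w t * A t)) volume p q' :=
    iwA.continuousOn_mul cHo
  have iHUq : IntervalIntegrable (fun t => hat M p q' t * (U t + q t * A t)) volume p q' :=
    (iU.add iqA).continuousOn_mul cHo
  have hJσ : |∫ t in p..q', hat M p q' t * (w t * A t)| =
      |σ * ∫ t in p..q', hat M p q' t * (w t * A t)| := by rw [abs_mul, hσa, one_mul]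
  refine ⟨|∫ t in p..q', hat M p q' t * (w t * A t)|, ?_, ?_, ?_⟩
  · have h1 := hat_parts hM hpq ((iwA.const_mul (-η)))
      (prim_sub hap hpq hqb (iwA0.const_mul (-η)) hP2p)
    have h2 : ∫ t in p..q', hat M p q' t * ((-η) * (w t * A t)) =
        (-η) * ∫ t in p..q', hat M p q' t * (w t * A t) := by
      rw [← intervalIntegral.integral_const_mul]; congr 1; ext t; ring
    rw [h2, abs_mul, abs_neg] at h1
    refine h1.trans (mul_le_mul_of_nonneg_left ?_ hM.le)
    exact intervalIntegral.integral_mono_on hpq cP2.abs.intervalIntegrable iR (fun t _ => hP2A t)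
  · have i1 := (iU.add iqA).sub (iwA.const_mul ρ)
    have i2 := (iU0.add iqA0).sub (iwA0.const_mul ρ)
    have h1 := hat_parts hM hpq i1 (prim_sub hap hpq hqb i2 hP1p)
    have h2 : ∫ t in p..q', hat M p q' t * (U t + q t * A t - ρ * (w t * A t)) =
        (∫ t in p..q', hat M p q' t * (U t + q t * A t)) -
         ρ * ∫ t in p..q', hat M p q' t * (w t * A t) := by
      rw [← intervalIntegral.integral_const_mul, ← intervalIntegral.integral_sub iHUq
        (iHwA.const_mul ρ)]
      congr 1; ext t; ring
    have h1' : |∫ t in p..q', hat M p q' t * (U t + q t * A t - ρ * (w t * A t))| ≤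
      M * ∫ t in p..q', |P1 t| := h1
    rw [h2] at h1'
    have h3 : ∫ t in p..q', |P1 t| ≤ ∫ t in p..q', √(A t) * √(U t) :=
      intervalIntegral.integral_mono_on hpq cP1.abs.intervalIntegrable iR (fun t _ => hP1A t)
    have h3' := mul_le_mul_of_nonneg_left h3 hM.le
    have h4 : |∫ t in p..q', hat M p q' t * (U t + q t * A t)| ≤
        (∫ t in p..q', U t) + (∫ t in p..q', |q t| * A t) := by
      rw [← intervalIntegral.integral_add iU iabs]
      refine (intervalIntegral.abs_integral_le_integral_abs hpq).trans ?_
      apply intervalIntegral.integral_mono_on hpq iHUq.abs (iU.add iabs)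
      intro t _
      rw [abs_mul, abs_of_nonneg (hat_nonneg _ _ _ _)]
      have h5 : |U t + q t * A t| ≤ U t + |q t| * A t := by
        refine (abs_add_le _ _).trans (le_of_eq ?_)
        rw [abs_mul, abs_of_nonneg (hU0 t), abs_of_nonneg (hA0 t)]
      have := mul_le_mul_of_nonneg_right (hat_le_one M p q' t) (abs_nonneg (U t + q t * A t))
      linarith
    rw [← abs_mul]
    have h6 := abs_sub_abs_le_abs_sub (ρ * ∫ t in p..q', hat M p q' t * (w t * A t))
      (∫ t in p..q', hat M p q' t * (U t + q t * A t))
    rw [abs_sub_comm] at h6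
    linarith
  · rw [hJσ]
    refine le_trans ?_ (le_abs_self _)
    have hms : MeasurableSet {t | |w t| < ε} := measurableSet_lt hwm.abs measurable_const
    have iI : IntervalIntegrable (fun t => {t | |w t| < ε}.indicator (1 : ℝ → ℝ) t) volume p q' := by
      have h1 : IntervalIntegrable (1 : ℝ → ℝ) volume p q' := by
        exact intervalIntegrable_const
      exact ⟨h1.1.indicator hms, h1.2.indicator hms⟩
    have iH1 : IntervalIntegrable (fun t => 1 - hat M p q' t) volume p q' :=
      (continuous_const.sub cH).intervalIntegrable _ _
    have h1 : ∫ t in p..q', ε * ((A t - S * {t | |w t| < ε}.indicator (1 : ℝ → ℝ) t)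
          - S * (1 - hat M p q' t)) ≤ ∫ t in p..q', σ * (hat M p q' t * (w t * A t)) := by
      apply intervalIntegral.integral_mono_ae_restrict hpq
        (((iA.sub (iI.const_mul S)).sub (iH1.const_mul S)).const_mul ε) (iHwA.const_mul σ)
      have hr : volume.restrict (Set.Icc p q') = volume.restrict (Set.Ioo p q') :=
        Measure.restrict_congr_set Ioo_ae_eq_Icc.symm
      rw [hr]
      filter_upwards [hsign, ae_restrict_mem measurableSet_Ioo] with t ht hmem
      have hAt := hA0 t
      have hASt := hAS t (hsub ⟨hmem.1.le, hmem.2.le⟩)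
      have hh0 := hat_nonneg M p q' t
      have hh1 := hat_le_one M p q' t
      have e1 : σ * (hat M p q' t * (w t * A t)) = (σ * w t) * (hat M p q' t * A t) := by ring
      have hh2 : 0 ≤ hat M p q' t * A t := mul_nonneg hh0 hAt
      have hh3 : (1 - hat M p q' t) * A t ≤ (1 - hat M p q' t) * S :=
        mul_le_mul_of_nonneg_left hASt (by linarith)
      simp only [e1]
      by_cases hwε : |w t| < ε
      · rw [Set.indicator_of_mem (by exact hwε)]
        refine le_trans ?_ (mul_nonneg ht.le hh2)
        apply mul_nonpos_of_nonneg_of_nonpos hε.le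
        simp only [Pi.one_apply, mul_one]
        nlinarith
      · rw [Set.indicator_of_notMem (by exact hwε)]
        push Not at hwε
        have : ε ≤ σ * w t := by
          rw [← abs_of_pos ht, abs_mul, hσa, one_mul]; exact hwε
        refine le_trans ?_ (mul_le_mul_of_nonneg_right this hh2)
        apply mul_le_mul_of_nonneg_left _ hε.le
        nlinarith
    rw [intervalIntegral.integral_const_mul, intervalIntegral.integral_const_mul,
      intervalIntegral.integral_sub (iA.sub (iI.const_mul S)) (iH1.const_mul S),
      intervalIntegral.integral_sub iA (iI.const_mul S),
      intervalIntegral.integral_const_mul, intervalIntegral.integral_const_mul] at h1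
    refine le_trans (mul_le_mul_of_nonneg_left ?_ hε.le) h1
    have h2 := mul_le_mul_of_nonneg_left (hat_int hM hpq) hS
    rw [mul_one_div] at h2
    linarith
lemma numerics {L α β γ B N2 U2 : ℝ} (hL : 0 < L) (hα : 0 ≤ α) (hN : 0 < N2) (hU : 0 ≤ U2)
    (hβ : β = √(α * (1 / L + α)) + α) (hγ : γ = √(2 * β + 1 / L))
    (hcs : B ^ 2 ≤ U2 * N2) (hUB : U2 ≤ α * (2 * B + N2 / L)) :
    U2 ≤ β ^ 2 * N2 ∧ B ≤ β * N2 ∧ 2 * B + N2 / L ≤ γ ^ 2 * N2 ∧ 0 < γ ^ 2 ∧ 0 ≤ β := by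
  have hL' : 0 < 1 / L := by positivity
  have hβ0 : 0 ≤ β := by rw [hβ]; positivity
  set v := √(U2 / N2) with hv
  have hv0 : 0 ≤ v := Real.sqrt_nonneg _
  have hv2 : v ^ 2 = U2 / N2 := Real.sq_sqrt (by positivity)
  have hU2 : U2 = v ^ 2 * N2 := by rw [hv2]; field_simp
  have hB : B ≤ v * N2 := by
    apply le_of_abs_le
    apply abs_le_of_sq_le_sq _ (by positivity)
    rw [hU2] at hcs; linarith [hcs]
  have h1 : v ^ 2 ≤ α * (2 * v + 1 / L) := by
    have h2 : v ^ 2 * N2 ≤ α * (2 * v + 1 / L) * N2 := by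
      rw [← hU2]
      refine hUB.trans ?_
      rw [mul_assoc]
      apply mul_le_mul_of_nonneg_left _ hα
      have : N2 / L = 1 / L * N2 := by ring
      rw [this]; linarith
    exact le_of_mul_le_mul_right h2 hN
  have hvβ : v ≤ β := by
    rw [hβ, ← sub_le_iff_le_add]
    apply Real.le_sqrt_of_sq_le
    nlinarith
  have hγ2 : γ ^ 2 = 2 * β + 1 / L := by rw [hγ]; exact Real.sq_sqrt (by positivity)
  have hBβ : B ≤ β * N2 := hB.trans (mul_le_mul_of_nonneg_right hvβ hN.le)
  refine ⟨?_, hBβ, ?_, ?_, hβ0⟩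
  · rw [hU2]; gcongr
  · rw [hγ2]
    have : N2 / L = 1 / L * N2 := by ring
    rw [this]; linarith
  · rw [hγ2]; positivity

lemma core {a b l r ρ η c α β γ ε s : ℝ} {q w A U P1 P2 : ℝ → ℝ} (hab : a < b)
    (hqm : Measurable q) (hwm : Measurable w)
    (hq : IntervalIntegrable q volume a b) (hw : IntervalIntegrable w volume a b)
    (n : ℕ) (x : ℕ → ℝ) (hx0 : x 0 = a) (hxlast : x (n + 1) = b)
    (hxmono : ∀ k ≤ n, x k < x (k + 1))
    (hs : s = 1 ∨ s = -1)
    (hsign : ∀ k ≤ n, ∀ᵐ t ∂(volume.restrict (Set.Ioo (x k) (x (k + 1)))),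
        0 < s * (-1 : ℝ) ^ k * w t)
    (hc : c = |l| + |r|)
    (hα : α = c + ∫ t in a..b, |min (q t) 0|)
    (hβ : β = Real.sqrt (α * (1 / (b - a) + α)) + α)
    (hγ : γ = Real.sqrt (2 * β + 1 / (b - a)))
    (hε : 0 < ε)
    (hεcond : volume {x | x ∈ Set.Ioo a b ∧ |w x| < ε}
        ≤ ENNReal.ofReal (1 / (4 * γ ^ 2)))
    (hη : η ≠ 0)
    (hA : ContinuousOn A (Set.Icc a b)) (hU : ContinuousOn U (Set.Icc a b))
    (hP1 : ContinuousOn P1 (Set.Icc a b)) (hP2 : ContinuousOn P2 (Set.Icc a b))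
    (hA0 : ∀ t, 0 ≤ A t) (hU0 : ∀ t, 0 ≤ U t)
    (hAne : ∃ t ∈ Set.Icc a b, A t ≠ 0)
    (hAp : ∀ y ∈ Set.Icc a b, A y = A a + ∫ t in a..y, 2 * P1 t)
    (hP1p : ∀ y ∈ Set.Icc a b, P1 y = P1 a + ∫ t in a..y, (U t + q t * A t - ρ * (w t * A t)))
    (hP2p : ∀ y ∈ Set.Icc a b, P2 y = P2 a + ∫ t in a..y, (-η) * (w t * A t))
    (hP1A : ∀ t, |P1 t| ≤ √(A t) * √(U t)) (hP2A : ∀ t, |P2 t| ≤ √(A t) * √(U t))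
    (hP2a : P2 a = 0) (hP2b : P2 b = 0) (hP1a : P1 a = l * A a) (hP1b : P1 b = r * A b) :
    |η| ≤ 8 / ε * β * γ ^ 2 * (n + 1)
          ∧ |ρ| ≤ 2 / ε *
              (4 * β * γ ^ 2 * (n + 1) + β ^ 2 + γ ^ 2 * ∫ t in a..b, |q t|) := by
  have ub : Set.uIcc a b = Set.Icc a b := Set.uIcc_of_le hab.le
  have hL : 0 < b - a := by linarith
  have amem : a ∈ Set.Icc a b := ⟨le_rfl, hab.le⟩
  have bmem : b ∈ Set.Icc a b := ⟨hab.le, le_rfl⟩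
  have hA' : ContinuousOn A (Set.uIcc a b) := by rwa [ub]
  have hU' : ContinuousOn U (Set.uIcc a b) := by rwa [ub]
  have hP1' : ContinuousOn P1 (Set.uIcc a b) := by rwa [ub]
  have cR : ContinuousOn (fun t => √(A t) * √(U t)) (Set.uIcc a b) := hA'.sqrt.mul hU'.sqrt
  have iA : IntervalIntegrable A volume a b := hA'.intervalIntegrable
  have iU : IntervalIntegrable U volume a b := hU'.intervalIntegrable
  have iP1 : IntervalIntegrable P1 volume a b := hP1'.intervalIntegrable
  have iR : IntervalIntegrable (fun t => √(A t) * √(U t)) volume a b := cR.intervalIntegrable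
  have iwA : IntervalIntegrable (fun t => w t * A t) volume a b := hw.mul_continuousOn hA'
  have iqA : IntervalIntegrable (fun t => q t * A t) volume a b := hq.mul_continuousOn hA'
  have iabs : IntervalIntegrable (fun t => |q t| * A t) volume a b := hq.abs.mul_continuousOn hA'
  have imin : IntervalIntegrable (fun t => |min (q t) 0|) volume a b := by
    refine hq.abs.mono_fun ((hqm.min measurable_const).abs.aestronglyMeasurable) ?_
    refine Filter.Eventually.of_forall fun t => ?_
    simp only [Real.norm_eq_abs, abs_abs]
    rcases le_total (q t) 0 with h | h
    · rw [min_eq_left h]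
    · rw [min_eq_right h]; simp
  have iminA : IntervalIntegrable (fun t => |min (q t) 0| * A t) volume a b :=
    imin.mul_continuousOn hA'
  set B := ∫ t in a..b, √(A t) * √(U t) with hB
  set N2 := ∫ t in a..b, A t with hN2
  set U2 := ∫ t in a..b, U t with hU2
  have hU20 : 0 ≤ U2 := intervalIntegral.integral_nonneg hab.le (fun t _ => hU0 t)
  have hN2pos : 0 < N2 := by
    obtain ⟨z, hz, hzne⟩ := hAne
    exact intervalIntegral.integral_pos hab hA (fun t _ => hA0 t)
      ⟨z, hz, lt_of_le_of_ne (hA0 z) (Ne.symm hzne)⟩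
  -- Cauchy-Schwarz
  have hcs : B ^ 2 ≤ U2 * N2 := by
    have h1 : ∀ τ : ℝ, 0 ≤ U2 - 2 * τ * B + τ ^ 2 * N2 := by
      intro τ
      have h2 : U2 - 2 * τ * B + τ ^ 2 * N2 = ∫ t in a..b, (√(U t) - τ * √(A t)) ^ 2 := by
        rw [hU2, hB, hN2, ← intervalIntegral.integral_const_mul,
          ← intervalIntegral.integral_const_mul,
          ← intervalIntegral.integral_sub iU (iR.const_mul _),
          ← intervalIntegral.integral_add (iU.sub (iR.const_mul _)) (iA.const_mul _)]
        congr 1; ext t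
        have e1 := Real.sq_sqrt (hU0 t)
        have e2 := Real.sq_sqrt (hA0 t)
        linear_combination -e1 - τ ^ 2 * e2
      rw [h2]
      exact intervalIntegral.integral_nonneg hab.le (fun t _ => sq_nonneg _)
    have h3 := h1 (B / N2)
    have h4 : U2 - 2 * (B / N2) * B + (B / N2) ^ 2 * N2 = (U2 * N2 - B ^ 2) / N2 := by
      field_simp; ring
    rw [h4] at h3
    by_contra! hcon
    have h5 : (U2 * N2 - B ^ 2) / N2 < 0 := div_neg_of_neg_of_pos (by linarith) hN2pos
    linarith
  -- sup bound
  have hsup : ∀ y ∈ Set.Icc a b, A y ≤ 2 * B + N2 / (b - a) := by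
    intro y hy
    have hz : ∃ z ∈ Set.Icc a b, A z ≤ N2 / (b - a) := by
      by_contra! hcon
      have h1 : ∫ t in a..b, N2 / (b - a) < ∫ t in a..b, A t := by
        apply intervalIntegral.integral_lt_integral_of_continuousOn_of_le_of_exists_lt hab
          continuousOn_const hA (fun t ht => (hcon t ⟨ht.1.le, ht.2⟩).le) ⟨a, amem, hcon a amem⟩
      rw [intervalIntegral.integral_const, smul_eq_mul, mul_div_cancel₀ _ hL.ne'] at h1
      exact lt_irrefl _ h1
    obtain ⟨z, hz, hzA⟩ := hz
    have h2 : A y - A z = ∫ t in z..y, 2 * P1 t := by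
      rw [hAp y hy, hAp z hz]
      have i1 : ∀ z ∈ Set.Icc a b, IntervalIntegrable (fun t => 2 * P1 t) volume a z := fun z hz => by
        apply (iP1.const_mul 2).mono_set
        rw [ub, Set.uIcc_of_le hz.1]; exact Set.Icc_subset_Icc le_rfl hz.2
      rw [← intervalIntegral.integral_interval_sub_left (i1 y hy) (i1 z hz)]
      ring
    have h3 : |∫ t in z..y, 2 * P1 t| ≤ 2 * B := by
      have e1 : |∫ t in z..y, 2 * P1 t| ≤ |∫ t in z..y, (|2 * P1 t|)| := by
        have := intervalIntegral.norm_integral_le_abs_integral_norm (f := fun t => 2 * P1 t)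
          (a := z) (b := y) (μ := volume)
        simpa only [Real.norm_eq_abs] using this
      have e2 : |∫ t in z..y, (|2 * P1 t|)| ≤ |∫ t in a..b, (|2 * P1 t|)| := by
        apply intervalIntegral.abs_integral_mono_interval
        · rw [Set.uIoc_of_le hab.le]
          intro t ht
          rw [Set.mem_uIoc] at ht
          rcases ht with ht | ht
          · exact ⟨lt_of_le_of_lt hz.1 ht.1, ht.2.trans hy.2⟩
          · exact ⟨lt_of_le_of_lt hy.1 ht.1, ht.2.trans hz.2⟩
        · exact Filter.Eventually.of_forall fun t => abs_nonneg _
        · exact (iP1.const_mul 2).abs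
      have e3 : |∫ t in a..b, (|2 * P1 t|)| ≤ 2 * B := by
        rw [abs_of_nonneg (intervalIntegral.integral_nonneg hab.le (fun t _ => abs_nonneg _)),
          hB, ← intervalIntegral.integral_const_mul]
        apply intervalIntegral.integral_mono_on hab.le (iP1.const_mul 2).abs (iR.const_mul 2)
        intro t _
        rw [abs_mul, abs_two]
        linarith [hP1A t]
      linarith
    have := le_abs_self (∫ t in z..y, 2 * P1 t)
    linarith
  set S0 := 2 * B + N2 / (b - a) with hS0
  have hS00 : 0 ≤ S0 := (hA0 a).trans (hsup a amem)
  have hα0 : 0 ≤ α := by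
    rw [hα, hc]
    have := intervalIntegral.integral_nonneg (μ := volume) hab.le
      (fun t (_ : t ∈ Set.Icc a b) => abs_nonneg (min (q t) 0))
    positivity
  -- energy estimate
  have hUB : U2 ≤ α * S0 := by
    have h1 := hP2p b bmem
    rw [hP2a, hP2b, intervalIntegral.integral_const_mul, zero_add] at h1
    have h2 : ∫ t in a..b, w t * A t = 0 := by
      rcases mul_eq_zero.mp h1.symm with h | h
      · exact absurd (neg_eq_zero.mp h) hη
      · exact h
    have h3 := hP1p b bmem
    rw [intervalIntegral.integral_sub (iU.add iqA) (iwA.const_mul ρ),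
      intervalIntegral.integral_add iU iqA, intervalIntegral.integral_const_mul, h2, hP1a, hP1b] at h3
    have h4 : -∫ t in a..b, q t * A t ≤ ∫ t in a..b, |min (q t) 0| * S0 := by
      rw [← intervalIntegral.integral_neg]
      apply intervalIntegral.integral_mono_on hab.le iqA.neg (imin.mul_const S0)
      intro t ht
      have e1 : -q t ≤ |min (q t) 0| := by
        have := neg_abs_le (min (q t) 0)
        have := min_le_left (q t) 0
        linarith
      have := mul_le_mul_of_nonneg_right e1 (hA0 t)
      have := mul_le_mul_of_nonneg_left (hsup t ht) (abs_nonneg (min (q t) 0))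
      simp only [Pi.neg_apply]
      linarith
    rw [intervalIntegral.integral_mul_const] at h4
    have h5 : r * A b ≤ |r| * S0 := by
      have e1 := mul_le_mul_of_nonneg_right (le_abs_self r) (hA0 b)
      have e2 := mul_le_mul_of_nonneg_left (hsup b bmem) (abs_nonneg r)
      linarith
    have h6 : -l * A a ≤ |l| * S0 := by
      have e1 := mul_le_mul_of_nonneg_right (neg_le_abs l) (hA0 a)
      have e2 := mul_le_mul_of_nonneg_left (hsup a amem) (abs_nonneg l)
      linarith
    rw [hα, hc]
    linarith
  obtain ⟨hUβ, hBβ, hSγ, hγpos, hβ0⟩ := numerics hL hα0 hN2pos hU20 hβ hγ hcs hUB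
  set S := γ ^ 2 * N2 with hS
  have hSnn : 0 ≤ S := by positivity
  have hAS : ∀ t ∈ Set.Icc a b, A t ≤ S := fun t ht => (hsup t ht).trans hSγ
  set M := 4 * γ ^ 2 * (n + 1) with hM
  have hMpos : 0 < M := by positivity
  -- positions of the points
  have hxm : ∀ j ≤ n + 1, ∀ i ≤ j, x i ≤ x j := by
    intro j
    induction j with
    | zero => intro _ i hi; rw [Nat.le_zero.mp hi]
    | succ j ih =>
      intro hj i hi
      rcases Nat.le_succ_iff.mp hi with h | h
      · exact (ih (by omega) i h).trans (hxmono j (by omega)).le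
      · rw [h]
  have hxa : ∀ i ≤ n + 1, a ≤ x i := fun i hi => hx0 ▸ hxm i hi 0 (Nat.zero_le _)
  have hxb : ∀ i ≤ n + 1, x i ≤ b := fun i hi => hxlast ▸ hxm (n + 1) le_rfl i hi
  have hpc : ∀ k : ℕ, ∃ J : ℝ, k ≤ n → (|η| * J ≤ M * ∫ t in (x k)..(x (k+1)), √(A t) * √(U t) ∧
      |ρ| * J ≤ (∫ t in (x k)..(x (k+1)), U t) + (∫ t in (x k)..(x (k+1)), |q t| * A t) +
          M * ∫ t in (x k)..(x (k+1)), √(A t) * √(U t) ∧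
      ε * ((∫ t in (x k)..(x (k+1)), A t) -
        S * (∫ t in (x k)..(x (k+1)), {t | |w t| < ε}.indicator 1 t) - S / M) ≤ J) := by
    intro k
    by_cases hk : k ≤ n
    · have hσ : s * (-1 : ℝ) ^ k = 1 ∨ s * (-1 : ℝ) ^ k = -1 := by
        rcases neg_one_pow_eq_or ℝ k with h | h <;> rcases hs with h' | h' <;> simp [h, h']
      obtain ⟨J, hJ⟩ := piece (hxa k (by omega)) (hxmono k hk).le (hxb (k+1) (by omega)) hMpos hε hSnn
        hσ hwm hq hw hA hU hP1 hP2 hA0 hU0 hAS hP1p hP2p hP1A hP2A (hsign k hk)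
      exact ⟨J, fun _ => hJ⟩
    · exact ⟨0, fun h => absurd h hk⟩
  choose J hJ using hpc
  have hsum : ∀ f : ℝ → ℝ, IntervalIntegrable f volume a b →
      ∑ k ∈ Finset.range (n + 1), ∫ t in (x k)..(x (k+1)), f t = ∫ t in a..b, f t := by
    intro f hf
    rw [intervalIntegral.sum_integral_adjacent_intervals, hx0, hxlast]
    intro k hk
    apply hf.mono_set
    rw [ub, Set.uIcc_of_le (hxmono k (by omega)).le]
    exact Set.Icc_subset_Icc (hxa k (by omega)) (hxb (k+1) (by omega))
  have hms : MeasurableSet {t | |w t| < ε} := measurableSet_lt hwm.abs measurable_const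
  have iI : IntervalIntegrable (fun t => {t | |w t| < ε}.indicator (1 : ℝ → ℝ) t) volume a b := by
    have h1 : IntervalIntegrable (1 : ℝ → ℝ) volume a b := intervalIntegrable_const
    exact ⟨h1.1.indicator hms, h1.2.indicator hms⟩
  have hIle : ∫ t in a..b, {t | |w t| < ε}.indicator (1 : ℝ → ℝ) t ≤ 1 / (4 * γ ^ 2) := by
    rw [intervalIntegral.integral_of_le hab.le, integral_Ioc_eq_integral_Ioo,
      integral_indicator_one hms, Measure.real, Measure.restrict_apply hms]
    apply ENNReal.toReal_le_of_le_ofReal (by positivity)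
    refine le_trans (measure_mono ?_) hεcond
    intro t ht
    exact ⟨ht.2, ht.1⟩
  set T := ∑ k ∈ Finset.range (n + 1), J k with hT
  have hT1 : |η| * T ≤ M * B := by
    rw [hT, Finset.mul_sum, hB, ← hsum _ iR, Finset.mul_sum]
    exact Finset.sum_le_sum fun k hk => (hJ k (by simpa [Nat.lt_succ_iff] using hk)).1
  have hT2 : |ρ| * T ≤ U2 + (∫ t in a..b, |q t| * A t) + M * B := by
    rw [hT, Finset.mul_sum, hB, ← hsum _ iR, Finset.mul_sum, hU2, ← hsum _ iU, ← hsum _ iabs,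
      ← Finset.sum_add_distrib, ← Finset.sum_add_distrib]
    exact Finset.sum_le_sum fun k hk => (hJ k (by simpa [Nat.lt_succ_iff] using hk)).2.1
  have hT3 : ε * (N2 - S * (∫ t in a..b, {t | |w t| < ε}.indicator (1 : ℝ → ℝ) t)
      - (n + 1) * (S / M)) ≤ T := by
    have e1 : ((n : ℝ) + 1) * (S / M) = ∑ k ∈ Finset.range (n + 1), (S / M) := by
      rw [Finset.sum_const, Finset.card_range, nsmul_eq_mul]; push_cast; ring
    rw [hT, e1, hN2, ← hsum _ iA, ← hsum _ iI, Finset.mul_sum, ← Finset.sum_sub_distrib,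
      ← Finset.sum_sub_distrib, Finset.mul_sum]
    exact Finset.sum_le_sum fun k hk => (hJ k (by simpa [Nat.lt_succ_iff] using hk)).2.2
  have hT4 : ε * (N2 / 2) ≤ T := by
    refine le_trans (mul_le_mul_of_nonneg_left ?_ hε.le) hT3
    have e1 := mul_le_mul_of_nonneg_left hIle hSnn
    have hγne : γ ≠ 0 := fun h => by simp [h] at hγpos
    have e2 : S * (1 / (4 * γ ^ 2)) = N2 / 4 := by
      rw [hS]; field_simp
    have e3 : ((n : ℝ) + 1) * (S / M) = N2 / 4 := by
      rw [hS, hM]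
      have : (n : ℝ) + 1 ≠ 0 := by positivity
      field_simp
    linarith
  have hqA : ∫ t in a..b, |q t| * A t ≤ S * ∫ t in a..b, |q t| := by
    rw [← intervalIntegral.integral_const_mul]
    apply intervalIntegral.integral_mono_on hab.le iabs (hq.abs.const_mul S)
    intro t ht
    have := mul_le_mul_of_nonneg_left (hAS t ht) (abs_nonneg (q t))
    linarith
  have hMB := mul_le_mul_of_nonneg_left hBβ hMpos.le
  constructor
  · have h1 := mul_le_mul_of_nonneg_left hT4 (abs_nonneg η)
    have h2 : (|η| * ε) * N2 ≤ (2 * M * β) * N2 := by linarith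
    have h3 := le_of_mul_le_mul_right h2 hN2pos
    rw [← le_div_iff₀ hε] at h3
    refine h3.trans (le_of_eq ?_)
    rw [hM]; ring
  · have h1 := mul_le_mul_of_nonneg_left hT4 (abs_nonneg ρ)
    have h2 : (|ρ| * ε) * N2 ≤ (2 * (M * β + β ^ 2 + γ ^ 2 * ∫ t in a..b, |q t|)) * N2 := by
      rw [hS] at hqA
      linarith
    have h3 := le_of_mul_le_mul_right h2 hN2pos
    rw [← le_div_iff₀ hε] at h3
    refine h3.trans (le_of_eq ?_)
    rw [hM]; ring

/-- Corollary 3.3 of the paper (for separated self-adjoint boundary conditions):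
if p = 1 and the weight w has exactly n turning points, then the non-real
eigenvalues satisfy |Im λ| ≤ (8/ε)βγ²(n+1) and
|Re λ| ≤ (2/ε)(4βγ²(n+1) + β² + γ²‖q‖₁). -/
theorem nonreal_eigenvalue_bounds_turning_points
    (a b : ℝ) (hab : a < b) (q w : ℝ → ℝ)
    (hqm : Measurable q) (hwm : Measurable w)
    (hq_int : IntegrableOn q (Set.Ioc a b))
    (hw_int : IntegrableOn w (Set.Ioc a b))
    (hw_ne : ∀ᵐ x ∂(volume.restrict (Set.Ioc a b)), w x ≠ 0)
    (hw_pos : 0 < volume {x ∈ Set.Ioc a b | 0 < w x})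
    (hw_neg : 0 < volume {x ∈ Set.Ioc a b | w x < 0})
    -- w has exactly n turning points x 1 < … < x n in (a,b)
    (n : ℕ) (x : ℕ → ℝ) (hx0 : x 0 = a) (hxlast : x (n + 1) = b)
    (hxmono : ∀ k ≤ n, x k < x (k + 1))
    (s : ℝ) (hs : s = 1 ∨ s = -1)
    (hsign : ∀ k ≤ n, ∀ᵐ t ∂(volume.restrict (Set.Ioo (x k) (x (k + 1)))),
        0 < s * (-1 : ℝ) ^ k * w t)
    (l r : ℝ) (c α β γ : ℝ)
    (hc : c = |l| + |r|)
    (hα : α = c + ∫ t in a..b, |min (q t) 0|)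
    (hβ : β = Real.sqrt (α * (1 / (b - a) + α)) + α)
    (hγ : γ = Real.sqrt (2 * β + 1 / (b - a)))
    (ε : ℝ) (hε : 0 < ε)
    (hεcond : volume {x | x ∈ Set.Ioo a b ∧ |w x| < ε}
        ≤ ENNReal.ofReal (1 / (4 * γ ^ 2))) :
    ∀ lam : ℂ, lam.im ≠ 0 →
      ∀ φ u : ℝ → ℂ,
        ContinuousOn φ (Set.Icc a b) → ContinuousOn u (Set.Icc a b) →
        (∀ y ∈ Set.Icc a b, φ y = φ a + ∫ t in a..y, u t) →
        (∀ y ∈ Set.Icc a b,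
            u y = u a + ∫ t in a..y, ((q t : ℂ) - lam * (w t : ℂ)) * φ t) →
        (∃ y ∈ Set.Icc a b, φ y ≠ 0) →
        u a = (l : ℂ) * φ a → u b = (r : ℂ) * φ b →
        |lam.im| ≤ 8 / ε * β * γ ^ 2 * (n + 1)
          ∧ |lam.re| ≤ 2 / ε *
              (4 * β * γ ^ 2 * (n + 1) + β ^ 2 + γ ^ 2 * ∫ t in a..b, |q t|) := by
  intro lam hlam φ u hφ hu hφp hup hne hua hub
  have ub : Set.uIcc a b = Set.Icc a b := Set.uIcc_of_le hab.le
  have hq : IntervalIntegrable q volume a b :=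
    (intervalIntegrable_iff_integrableOn_Ioc_of_le hab.le).mpr hq_int
  have hw : IntervalIntegrable w volume a b :=
    (intervalIntegrable_iff_integrableOn_Ioc_of_le hab.le).mpr hw_int
  have cφ1 : ContinuousOn (fun t => (φ t).re) (Set.Icc a b) := Complex.continuous_re.comp_continuousOn hφ
  have cφ2 : ContinuousOn (fun t => (φ t).im) (Set.Icc a b) := Complex.continuous_im.comp_continuousOn hφ
  have cu1 : ContinuousOn (fun t => (u t).re) (Set.Icc a b) := Complex.continuous_re.comp_continuousOn hu
  have cu2 : ContinuousOn (fun t => (u t).im) (Set.Icc a b) := Complex.continuous_im.comp_continuousOn hu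
  have hmono : ∀ f : ℝ → ℂ, IntervalIntegrable f volume a b → ∀ y ∈ Set.Icc a b,
      IntervalIntegrable f volume a y := fun f hf y hy => by
    apply hf.mono_set
    rw [ub, Set.uIcc_of_le hy.1]; exact Set.Icc_subset_Icc le_rfl hy.2
  have hmonoR : ∀ f : ℝ → ℝ, IntervalIntegrable f volume a b → ∀ y ∈ Set.Icc a b,
      IntervalIntegrable f volume a y := fun f hf y hy => by
    apply hf.mono_set
    rw [ub, Set.uIcc_of_le hy.1]; exact Set.Icc_subset_Icc le_rfl hy.2
  have iu : IntervalIntegrable u volume a b := ContinuousOn.intervalIntegrable (by rwa [ub])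
  have iv : IntervalIntegrable (fun t => ((q t : ℂ) - lam * (w t : ℂ)) * φ t) volume a b := by
    apply IntervalIntegrable.mul_continuousOn _ (by rwa [ub])
    have ofR : ∀ f : ℝ → ℝ, IntervalIntegrable f volume a b →
        IntervalIntegrable (fun t => (f t : ℂ)) volume a b := fun f hf =>
      ⟨hf.1.ofReal, hf.2.ofReal⟩
    exact (ofR q hq).sub ((ofR w hw).const_mul lam)
  have hre : ∀ f : ℝ → ℂ, IntervalIntegrable f volume a b → ∀ y ∈ Set.Icc a b,
      (∫ t in a..y, f t).re = ∫ t in a..y, (f t).re := fun f hf y hy => by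
    exact (intervalIntegral.intervalIntegral_re (𝕜 := ℂ) (hmono f hf y hy)).symm
  have him : ∀ f : ℝ → ℂ, IntervalIntegrable f volume a b → ∀ y ∈ Set.Icc a b,
      (∫ t in a..y, f t).im = ∫ t in a..y, (f t).im := fun f hf y hy => by
    exact (intervalIntegral.intervalIntegral_im (𝕜 := ℂ) (hmono f hf y hy)).symm
  have iref : ∀ f : ℝ → ℂ, IntervalIntegrable f volume a b →
      IntervalIntegrable (fun t => (f t).re) volume a b := fun f hf =>
    ⟨hf.1.re, hf.2.re⟩
  have iimf : ∀ f : ℝ → ℂ, IntervalIntegrable f volume a b →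
      IntervalIntegrable (fun t => (f t).im) volume a b := fun f hf =>
    ⟨hf.1.im, hf.2.im⟩
  have pφ1 : ∀ y ∈ Set.Icc a b, (φ y).re = (φ a).re + ∫ t in a..y, (u t).re := fun y hy => by
    rw [← hre u iu y hy, ← Complex.add_re, ← hφp y hy]
  have pφ2 : ∀ y ∈ Set.Icc a b, (φ y).im = (φ a).im + ∫ t in a..y, (u t).im := fun y hy => by
    rw [← him u iu y hy, ← Complex.add_im, ← hφp y hy]
  set v : ℝ → ℂ := fun t => ((q t : ℂ) - lam * (w t : ℂ)) * φ t with hv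
  have pu1 : ∀ y ∈ Set.Icc a b, (u y).re = (u a).re + ∫ t in a..y, (v t).re := fun y hy => by
    rw [← hre v iv y hy, ← Complex.add_re, ← hup y hy]
  have pu2 : ∀ y ∈ Set.Icc a b, (u y).im = (u a).im + ∫ t in a..y, (v t).im := fun y hy => by
    rw [← him v iv y hy, ← Complex.add_im, ← hup y hy]
  have iu1 := iref u iu
  have iu2 := iimf u iu
  have iv1 := iref v iv
  have iv2 := iimf v iv
  have comb : ∀ (F f G g F' f' G' g' : ℝ → ℝ) (τ : ℝ),
      ContinuousOn F (Set.Icc a b) → ContinuousOn G (Set.Icc a b) →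
      ContinuousOn F' (Set.Icc a b) → ContinuousOn G' (Set.Icc a b) →
      IntervalIntegrable f volume a b → IntervalIntegrable g volume a b →
      IntervalIntegrable f' volume a b → IntervalIntegrable g' volume a b →
      (∀ y ∈ Set.Icc a b, F y = F a + ∫ t in a..y, f t) →
      (∀ y ∈ Set.Icc a b, G y = G a + ∫ t in a..y, g t) →
      (∀ y ∈ Set.Icc a b, F' y = F' a + ∫ t in a..y, f' t) →
      (∀ y ∈ Set.Icc a b, G' y = G' a + ∫ t in a..y, g' t) →
      ∀ y ∈ Set.Icc a b, F y * G y + τ * (F' y * G' y) = (F a * G a + τ * (F' a * G' a)) +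
        ∫ t in a..y, ((f t * G t + F t * g t) + τ * (f' t * G' t + F' t * g' t)) := by
    intro F f G g F' f' G' g' τ cF cG cF' cG' jf jg jf' jg' pF pG pF' pG' y hy
    have i1 : IntervalIntegrable (fun t => f t * G t + F t * g t) volume a b :=
      (jf.mul_continuousOn (by rwa [ub])).add (jg.continuousOn_mul (by rwa [ub]))
    have i2 : IntervalIntegrable (fun t => f' t * G' t + F' t * g' t) volume a b :=
      (jf'.mul_continuousOn (by rwa [ub])).add (jg'.continuousOn_mul (by rwa [ub]))
    rw [intervalIntegral.integral_add (hmonoR _ i1 y hy) ((hmonoR _ i2 y hy).const_mul τ),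
      intervalIntegral.integral_const_mul, prod_prim jf jg pF pG y hy,
      prod_prim jf' jg' pF' pG' y hy]
    ring
  have hA0 : ∀ t, 0 ≤ (φ t).re * (φ t).re + 1 * ((φ t).im * (φ t).im) := fun t => by
    nlinarith [mul_self_nonneg (φ t).re, mul_self_nonneg (φ t).im]
  have hU0 : ∀ t, 0 ≤ (u t).re * (u t).re + 1 * ((u t).im * (u t).im) := fun t => by
    nlinarith [mul_self_nonneg (u t).re, mul_self_nonneg (u t).im]
  refine core (A := fun t => (φ t).re * (φ t).re + 1 * ((φ t).im * (φ t).im))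
    (U := fun t => (u t).re * (u t).re + 1 * ((u t).im * (u t).im))
    (P1 := fun t => (φ t).re * (u t).re + 1 * ((φ t).im * (u t).im))
    (P2 := fun t => (φ t).re * (u t).im + (-1) * ((φ t).im * (u t).re))
    hab hqm hwm hq hw n x hx0 hxlast hxmono hs hsign hc hα hβ hγ hε hεcond hlam
    ?_ ?_ ?_ ?_ hA0 hU0 ?_ ?_ ?_ ?_ ?_ ?_ ?_ ?_ ?_ ?_
  · fun_prop
  · fun_prop
  · fun_prop
  · fun_prop
  · obtain ⟨y, hy, hyne⟩ := hne
    refine ⟨y, hy, fun h => hyne ?_⟩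
    apply Complex.normSq_eq_zero.mp
    rw [Complex.normSq_apply]; simpa using h
  · intro y hy
    have := comb _ _ _ _ _ _ _ _ 1 cφ1 cφ1 cφ2 cφ2 iu1 iu1 iu2 iu2 pφ1 pφ1 pφ2 pφ2 y hy
    refine this.trans ?_
    congr 2; ext t; ring
  · intro y hy
    have := comb _ _ _ _ _ _ _ _ 1 cφ1 cu1 cφ2 cu2 iu1 iv1 iu2 iv2 pφ1 pu1 pφ2 pu2 y hy
    refine this.trans ?_
    congr 2; ext t
    simp only [hv, Complex.mul_re, Complex.mul_im, Complex.sub_re, Complex.sub_im,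
      Complex.ofReal_re, Complex.ofReal_im]
    ring
  · intro y hy
    have := comb _ _ _ _ _ _ _ _ (-1) cφ1 cu2 cφ2 cu1 iu1 iv2 iu2 iv1 pφ1 pu2 pφ2 pu1 y hy
    refine this.trans ?_
    congr 2; ext t
    simp only [hv, Complex.mul_re, Complex.mul_im, Complex.sub_re, Complex.sub_im,
      Complex.ofReal_re, Complex.ofReal_im]
    ring
  · intro t
    rw [← Real.sqrt_mul (hA0 t)]
    apply Real.abs_le_sqrt
    nlinarith [sq_nonneg ((φ t).re * (u t).im - (φ t).im * (u t).re)]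
  · intro t
    rw [← Real.sqrt_mul (hA0 t)]
    apply Real.abs_le_sqrt
    nlinarith [sq_nonneg ((φ t).re * (u t).re + (φ t).im * (u t).im)]
  · simp only [hua, Complex.re_ofReal_mul, Complex.im_ofReal_mul]; ring
  · simp only [hub, Complex.re_ofReal_mul, Complex.im_ofReal_mul]; ring
  · simp only [hua, Complex.re_ofReal_mul, Complex.im_ofReal_mul]; ring
  · simp only [hub, Complex.re_ofReal_mul, Complex.im_ofReal_mul]; ring
end

section
/- Assume p = 1 a.e., that w has exactly n turning points in (a,b), and that ∫ₐᵇ w ≠ 0; set δ := 2 + 2‖w‖_{L¹}/|∫ₐᵇ w|. Fix l, r ∈ ℝ and set α := |l| + |r| + ‖q₋‖_{L¹}. Let ε > 0 satisfy μ₁({x ∈ (a,b) : |w(x)| < ε}) ≤ 1/(4αδ²), where μ₁ is Lebesgue measure. Then every λ ∈ ℂ with Im λ ≠ 0 for which there exists a solution (φ, u) of −φ'' + qφ = λwφ with φ not identically zero and u(a) = l·φ(a), u(b) = r·φ(b), satisfies |Im λ| ≤ (8/ε)·α²·δ³·(n+1) and |Re λ| ≤ (2/ε)·α·δ²·(4αδ(n+1)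 + α + ‖q‖_{L¹}). -/
open MeasureTheory Real Complex

/-- `F` is a primitive of the integrable function `f` on `[a,b]`. -/
def IsPrim (F f : ℝ → ℝ) (a b : ℝ) : Prop :=
  IntervalIntegrable f volume a b ∧ ∀ y ∈ Set.Icc a b, F y = F a + ∫ t in a..y, f t

theorem IsPrim.sub_eq {F f : ℝ → ℝ} {a b c d : ℝ} (h : IsPrim F f a b)
    (hac : a ≤ c) (hcd : c ≤ d) (hdb : d ≤ b) : F d = F c + ∫ t in c..d, f t := by
  rw [h.2 d ⟨hac.trans hcd, hdb⟩, h.2 c ⟨hac, hcd.trans hdb⟩, add_assoc,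
    intervalIntegral.integral_add_adjacent_intervals]
  · exact h.1.mono_set (by
      rw [Set.uIcc_of_le hac, Set.uIcc_of_le (by linarith)]; exact Set.Icc_subset_Icc le_rfl (by linarith))
  · exact h.1.mono_set (by
      rw [Set.uIcc_of_le hcd, Set.uIcc_of_le (by linarith)]; exact Set.Icc_subset_Icc (by linarith) (by linarith))

theorem IsPrim.restrict {F f : ℝ → ℝ} {a b c d : ℝ} (h : IsPrim F f a b)
    (hac : a ≤ c) (hcd : c ≤ d) (hdb : d ≤ b) : IsPrim F f c d := by
  refine ⟨h.1.mono_set ?_, fun y hy => h.sub_eq hac hy.1 (hy.2.trans hdb)⟩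
  rw [Set.uIcc_of_le hcd, Set.uIcc_of_le (by linarith)]
  exact Set.Icc_subset_Icc (by linarith) (by linarith)

theorem IsPrim.ac {F f : ℝ → ℝ} {a b : ℝ} (h : IsPrim F f a b) :
    AbsolutelyContinuousOnInterval (fun y => F a + ∫ t in a..y, f t) a b := by
  have h1 := h.1.absolutelyContinuousOnInterval_intervalIntegral (c := a) (by simp)
  have h2 : AbsolutelyContinuousOnInterval (fun _ : ℝ => F a) a b :=
    (LipschitzWith.const (F a)).lipschitzOnWith.absolutelyContinuousOnInterval
  exact h2.add h1

theorem IsPrim.continuousOn {F f : ℝ → ℝ} {a b : ℝ} (hab : a ≤ b) (h : IsPrim F f a b) :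
    ContinuousOn F (Set.Icc a b) := by
  have := h.ac.continuousOn
  rw [Set.uIcc_of_le hab] at this
  exact this.congr h.2

theorem IsPrim.congr {F f g : ℝ → ℝ} {a b : ℝ} (h : IsPrim F f a b) (hfg : ∀ t, f t = g t) :
    IsPrim F g a b := by
  rwa [← (funext hfg : f = g)]

theorem IsPrim.ae_deriv {F f : ℝ → ℝ} {a b : ℝ} (h : IsPrim F f a b) :
    ∀ᵐ x, x ∈ Set.uIcc a b → HasDerivAt (fun y => F a + ∫ t in a..y, f t) (f x) x := by
  filter_upwards [h.1.ae_hasDerivAt_integral] with x hx hx'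
  exact (hx hx' a (by simp)).const_add _

theorem IsPrim.mul_eq {F f G g : ℝ → ℝ} {a b : ℝ} (hab : a ≤ b) (hF : IsPrim F f a b)
    (hG : IsPrim G g a b) :
    F b * G b = F a * G a + ∫ t in a..b, (f t * G t + F t * g t) := by
  have key := hF.ac.integral_deriv_mul_eq_sub hG.ac
  have hb : b ∈ Set.Icc a b := ⟨hab, le_rfl⟩
  simp only [← hF.2 b hb, ← hG.2 b hb, intervalIntegral.integral_same, add_zero] at key
  rw [← sub_eq_iff_eq_add', ← key]
  apply intervalIntegral.integral_congr_ae
  filter_upwards [hF.ae_deriv, hG.ae_deriv] with x h1 h2 hx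
  have hx' := Set.uIoc_subset_uIcc hx
  rw [(h1 hx').deriv, (h2 hx').deriv]
  rw [Set.uIcc_of_le hab] at hx'
  rw [← hF.2 x hx', ← hG.2 x hx']

theorem IsPrim.mul {F f G g : ℝ → ℝ} {a b : ℝ} (hab : a ≤ b) (hF : IsPrim F f a b)
    (hG : IsPrim G g a b) :
    IsPrim (fun t => F t * G t) (fun t => f t * G t + F t * g t) a b := by
  have cF := hF.continuousOn hab
  have cG := hG.continuousOn hab
  rw [← Set.uIcc_of_le hab] at cF cG
  refine ⟨(hF.1.mul_continuousOn cG).add (hG.1.continuousOn_mul cF), fun y hy => ?_⟩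
  exact (hF.restrict le_rfl hy.1 hy.2).mul_eq hy.1 (hG.restrict le_rfl hy.1 hy.2)

theorem IsPrim.add {F f G g : ℝ → ℝ} {a b : ℝ} (hF : IsPrim F f a b)
    (hG : IsPrim G g a b) :
    IsPrim (fun t => F t + G t) (fun t => f t + g t) a b := by
  refine ⟨hF.1.add hG.1, fun y hy => ?_⟩
  have hab := hy.1.trans hy.2
  rw [intervalIntegral.integral_add (hF.restrict le_rfl hy.1 hy.2).1
    (hG.restrict le_rfl hy.1 hy.2).1]
  simp only [hF.2 y hy, hG.2 y hy]
  ring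

theorem IsPrim.sub {F f G g : ℝ → ℝ} {a b : ℝ} (hF : IsPrim F f a b)
    (hG : IsPrim G g a b) :
    IsPrim (fun t => F t - G t) (fun t => f t - g t) a b := by
  refine ⟨hF.1.sub hG.1, fun y hy => ?_⟩
  have hab := hy.1.trans hy.2
  rw [intervalIntegral.integral_sub (hF.restrict le_rfl hy.1 hy.2).1
    (hG.restrict le_rfl hy.1 hy.2).1]
  simp only [hF.2 y hy, hG.2 y hy]
  ring

/-- The trapezoid cut-off function on `[c,d]`. -/
theorem exists_tent (c d h : ℝ) (hcd : c < d) (hh : 0 < h) :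
    ∃ g g' χ : ℝ → ℝ, IsPrim g g' c d ∧ g c = 0 ∧ g d = 0 ∧
      (∀ t ∈ Set.Icc c d, 0 ≤ g t ∧ g t ≤ 1 ∧ 1 - g t ≤ χ t ∧ |g' t| ≤ 2 / h * χ t ∧
        (χ t = 0 ∨ χ t = 1)) ∧
      IntervalIntegrable χ volume c d ∧ ∫ t in c..d, χ t ≤ h := by
  let g : ℝ → ℝ := fun t => min 1 (min (2 / h * (t - c)) (2 / h * (d - t)))
  let S : Set ℝ := Set.Icc c (c + h / 2) ∪ Set.Icc (d - h / 2) d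
  have hS : MeasurableSet S := measurableSet_Icc.union measurableSet_Icc
  have h2 : 0 < 2 / h := by positivity
  have hlip : LipschitzWith ⟨2 / h, h2.le⟩ g := by
    apply LipschitzWith.of_dist_le_mul
    intro x y
    rw [Real.dist_eq, Real.dist_eq]
    have e1 : |(2 / h * (x - c)) - (2 / h * (y - c))| = 2 / h * |x - y| := by
      rw [← mul_sub, abs_mul, abs_of_pos h2]; congr 2; ring
    have e2 : |(2 / h * (d - x)) - (2 / h * (d - y))| = 2 / h * |x - y| := by
      rw [← mul_sub, abs_mul, abs_of_pos h2, abs_sub_comm x y]; congr 2; ring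
    refine (abs_min_sub_min_le_max _ _ _ _).trans ?_
    refine max_le (by simp; positivity) ((abs_min_sub_min_le_max _ _ _ _).trans ?_)
    rw [e1, e2, max_self]; exact le_rfl
  have hac : AbsolutelyContinuousOnInterval g c d :=
    hlip.lipschitzOnWith.absolutelyContinuousOnInterval
  have hχ : Integrable (S.indicator (fun _ => (1 : ℝ))) volume := by
    rw [integrable_indicator_iff hS]
    exact (continuous_const.integrableOn_Icc).union continuous_const.integrableOn_Icc
  refine ⟨g, deriv g, S.indicator (fun _ => 1), ⟨hac.intervalIntegrable_deriv, ?_⟩, ?_, ?_, ?_, ?_, ?_⟩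
  · intro y hy
    have : AbsolutelyContinuousOnInterval g c y :=
      hlip.lipschitzOnWith.absolutelyContinuousOnInterval
    rw [this.integral_deriv_eq_sub]; ring
  · have : 0 ≤ 2 / h * (d - c) := mul_nonneg h2.le (by linarith)
    simp only [g, sub_self, mul_zero, min_eq_left this]; simp
  · have : 0 ≤ 2 / h * (d - c) := mul_nonneg h2.le (by linarith)
    simp only [g, sub_self, mul_zero, min_eq_right this]; simp
  · intro t ht
    have hg0 : 0 ≤ g t := le_min zero_le_one (le_min (mul_nonneg h2.le (by linarith [ht.1]))
      (mul_nonneg h2.le (by linarith [ht.2])))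
    refine ⟨hg0, min_le_left _ _, ?_⟩
    by_cases hts : t ∈ S
    · rw [Set.indicator_of_mem hts]
      refine ⟨by linarith, ?_, Or.inr rfl⟩
      have := norm_deriv_le_of_lipschitz (x₀ := t) hlip
      rw [mul_one]; exact this
    · rw [Set.indicator_of_notMem hts]
      have ht1 : c + h / 2 < t := by
        by_contra hcon; exact hts (Or.inl ⟨ht.1, not_lt.1 hcon⟩)
      have ht2 : t < d - h / 2 := by
        by_contra hcon; exact hts (Or.inr ⟨not_lt.1 hcon, ht.2⟩)
      have hone : ∀ y ∈ Set.Ioo (c + h / 2) (d - h / 2), g y = 1 := by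
        intro y hy
        apply min_eq_left
        have e : 1 = 2 / h * (h / 2) := by field_simp
        refine le_min ?_ ?_ <;> rw [e] <;> apply mul_le_mul_of_nonneg_left _ h2.le <;>
          linarith [hy.1, hy.2]
      refine ⟨by rw [hone t ⟨ht1, ht2⟩]; simp, ?_, Or.inl rfl⟩
      have : g =ᶠ[nhds t] fun _ => 1 := by
        filter_upwards [Ioo_mem_nhds ht1 ht2] with y hy using hone y hy
      rw [this.deriv_eq]; simp
  · exact hχ.intervalIntegrable
  · rw [intervalIntegral.integral_of_le hcd.le]
    calc ∫ t in Set.Ioc c d, S.indicator (fun _ => (1 : ℝ)) t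
        ≤ ∫ t, S.indicator (fun _ => (1 : ℝ)) t :=
          setIntegral_le_integral hχ (Filter.Eventually.of_forall
            fun t => Set.indicator_nonneg (fun _ _ => zero_le_one) t)
      _ = volume.real S := by rw [integral_indicator hS]; simp
      _ ≤ volume.real (Set.Icc c (c + h / 2)) + volume.real (Set.Icc (d - h / 2) d) :=
          measureReal_union_le _ _
      _ = h := by
          rw [Real.volume_real_Icc_of_le (by linarith), Real.volume_real_Icc_of_le (by linarith)]; ring

theorem ii_mono {f : ℝ → ℝ} {a b c d : ℝ} (h : IntervalIntegrable f volume a b)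
    (hac : a ≤ c) (hcd : c ≤ d) (hdb : d ≤ b) : IntervalIntegrable f volume c d := by
  refine h.mono_set ?_
  rw [Set.uIcc_of_le hcd, Set.uIcc_of_le (by linarith)]
  exact Set.Icc_subset_Icc (by linarith) (by linarith)

theorem piece_bound (c d h κ B ε e : ℝ) (hcd : c < d) (hh : 0 < h) (hκ : 0 < κ) (hB : 0 ≤ B)
    (hε : 0 < ε) (he : e = 1 ∨ e = -1) (w E V T H Hb ω : ℝ → ℝ) (m : ℝ)
    (hw : ∀ᵐ t ∂(volume.restrict (Set.Ioo c d)), 0 < e * w t)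
    (hwi : IntervalIntegrable w volume c d)
    (hE : ContinuousOn E (Set.Icc c d)) (hE0 : ∀ t ∈ Set.Icc c d, 0 ≤ E t)
    (hEB : ∀ t ∈ Set.Icc c d, E t ≤ B)
    (hV : ContinuousOn V (Set.Icc c d)) (hV0 : ∀ t ∈ Set.Icc c d, 0 ≤ V t)
    (hT : IsPrim T (fun t => H t - m * w t * E t) c d)
    (hTE : ∀ t ∈ Set.Icc c d, T t ^ 2 ≤ E t * V t)
    (hHi : IntervalIntegrable H volume c d)
    (hHbi : IntervalIntegrable Hb volume c d)
    (hHb : ∀ t ∈ Set.Icc c d, |H t| ≤ Hb t)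
    (hωi : IntervalIntegrable ω volume c d)
    (hω : ∀ t ∈ Set.Ioo c d, (ω t = 1 ∨ (ω t = 0 ∧ ε ≤ |w t|))) :
    |m| * ε * ∫ t in c..d, (E t - B * ω t) ≤
      |m| * ε * (B * h) + (κ / 2 * (∫ t in c..d, V t) + 2 * B / (h * κ) + ∫ t in c..d, Hb t) := by
  obtain ⟨g, g', χ, hg, hgc, hgd, hgt, hχi, hχ⟩ := exists_tent c d h hcd hh
  have hu : Set.uIcc c d = Set.Icc c d := Set.uIcc_of_le hcd.le
  have cg := hg.continuousOn hcd.le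
  have cT := hT.continuousOn hcd.le
  have hEi : IntervalIntegrable E volume c d := (hu ▸ hE).intervalIntegrable
  have hVi : IntervalIntegrable V volume c d := (hu ▸ hV).intervalIntegrable
  -- integrability of the pieces
  have iwE : IntervalIntegrable (fun t => w t * (g t * E t)) volume c d :=
    hwi.mul_continuousOn (hu ▸ cg.mul hE)
  have igT : IntervalIntegrable (fun t => g' t * T t) volume c d :=
    hg.1.mul_continuousOn (hu ▸ cT)
  have igH : IntervalIntegrable (fun t => H t * g t) volume c d :=
    hHi.mul_continuousOn (hu ▸ cg)
  have key := hg.mul_eq hcd.le hT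
  rw [hgc, hgd, zero_mul, zero_mul, zero_add] at key
  have key2 : m * ∫ t in c..d, w t * (g t * E t) = ∫ t in c..d, (g' t * T t + H t * g t) := by
    rw [← intervalIntegral.integral_const_mul, ← sub_eq_zero,
      ← intervalIntegral.integral_sub (iwE.const_mul m) (igT.add igH), ← neg_eq_zero,
      ← intervalIntegral.integral_neg]
    rw [key]
    congr 1; ext t; ring
  -- lower bound
  have low : ε * ∫ t in c..d, (E t - B * ω t - B * χ t) ≤
      e * ∫ t in c..d, w t * (g t * E t) := by
    rw [← intervalIntegral.integral_const_mul, ← intervalIntegral.integral_const_mul,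
      intervalIntegral.integral_of_le hcd.le, intervalIntegral.integral_of_le hcd.le,
      integral_Ioc_eq_integral_Ioo, integral_Ioc_eq_integral_Ioo]
    refine integral_mono_ae ?_ ?_ ?_
    · exact (((hEi.sub (hωi.const_mul B)).sub (hχi.const_mul B)).const_mul ε).1.mono_set
        Set.Ioo_subset_Ioc_self
    · exact (iwE.const_mul e).1.mono_set Set.Ioo_subset_Ioc_self
    · filter_upwards [hw, ae_restrict_mem measurableSet_Ioo] with t hwt ht
      have ht' := Set.Ioo_subset_Icc_self ht
      obtain ⟨h0, h1, h2, h3, h4⟩ := hgt t ht'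
      have e0 := hE0 t ht'
      have eB := hEB t ht'
      have hpos : 0 ≤ (e * w t) * (g t * E t) := mul_nonneg hwt.le (mul_nonneg h0 e0)
      have hχ0 : 0 ≤ χ t := by rcases h4 with h4 | h4 <;> rw [h4] <;> norm_num
      have hg1 : (1 - g t) * E t ≤ χ t * B := mul_le_mul h2 eB e0 hχ0
      rcases hω t ht with hω1 | ⟨hω0, hεw⟩
      · rw [hω1]
        have : 0 ≤ χ t * B := mul_nonneg hχ0 hB
        have : ε * (E t - B * 1 - B * χ t) ≤ 0 :=
          mul_nonpos_of_nonneg_of_nonpos hε.le (by linarith)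
        linarith
      · rw [hω0]
        have habs : |w t| = e * w t := by
          rw [← abs_of_pos hwt, abs_mul]
          rcases he with he | he <;> rw [he] <;> simp
        rw [habs] at hεw
        have : ε * (E t - B * 0 - B * χ t) ≤ ε * (g t * E t) :=
          mul_le_mul_of_nonneg_left (by linarith) hε.le
        have : ε * (g t * E t) ≤ (e * w t) * (g t * E t) :=
          mul_le_mul_of_nonneg_right hεw (mul_nonneg h0 e0)
        linarith
  -- upper bound
  have up : |∫ t in c..d, (g' t * T t + H t * g t)| ≤
      ∫ t in c..d, (κ / 2 * V t + 2 * B / (h ^ 2 * κ) * χ t + Hb t) := by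
    have hbi : IntervalIntegrable (fun t => κ / 2 * V t + 2 * B / (h ^ 2 * κ) * χ t + Hb t)
        volume c d := ((hVi.const_mul _).add (hχi.const_mul _)).add hHbi
    rw [← Real.norm_eq_abs]
    refine intervalIntegral.norm_integral_le_of_norm_le hcd.le ?_ hbi
    refine Filter.Eventually.of_forall fun t ht => ?_
    have ht' := Set.Ioc_subset_Icc_self ht
    obtain ⟨h0, h1, h2, h3, h4⟩ := hgt t ht'
    have hT1 : |g' t * T t| ≤ κ / 2 * V t + 2 * B / (h ^ 2 * κ) * χ t := by
      have hv := hV0 t ht'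
      rcases h4 with h4 | h4
      · rw [h4, mul_zero] at h3
        have : g' t = 0 := abs_nonpos_iff.1 h3
        rw [this, h4]; simp; positivity
      · rw [h4, mul_one] at h3
        rw [h4, mul_one]
        have hT2 : T t ^ 2 ≤ B * V t :=
          (hTE t ht').trans (mul_le_mul_of_nonneg_right (hEB t ht') hv)
        have hg2 : g' t ^ 2 ≤ (2 / h) ^ 2 := by
          rw [← sq_abs]; exact pow_le_pow_left₀ (abs_nonneg _) h3 2
        apply abs_le_of_sq_le_sq _ (by positivity)
        have e1 : (g' t * T t) ^ 2 ≤ (2 / h) ^ 2 * (B * V t) := by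
          rw [mul_pow]; exact mul_le_mul hg2 hT2 (sq_nonneg _) (sq_nonneg _)
        refine e1.trans ?_
        have e2 : (2 / h) ^ 2 * (B * V t) = 4 * (κ / 2 * V t) * (2 * B / (h ^ 2 * κ)) := by
          field_simp; ring
        rw [e2]
        nlinarith [sq_nonneg (κ / 2 * V t - 2 * B / (h ^ 2 * κ))]
    have hH1 : |H t * g t| ≤ Hb t := by
      rw [abs_mul, abs_of_nonneg h0]
      exact (mul_le_of_le_one_right (abs_nonneg _) h1).trans (hHb t ht')
    exact (abs_add_le _ _).trans (add_le_add hT1 hH1)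
  -- combine
  have hle : e * ∫ t in c..d, w t * (g t * E t) ≤ |∫ t in c..d, w t * (g t * E t)| := by
    rcases he with he | he <;> rw [he]
    · rw [one_mul]; exact le_abs_self _
    · rw [neg_one_mul]; exact neg_le_abs _
  have fin : |m| * (ε * ∫ t in c..d, (E t - B * ω t - B * χ t)) ≤
      ∫ t in c..d, (κ / 2 * V t + 2 * B / (h ^ 2 * κ) * χ t + Hb t) :=
    calc _ ≤ |m| * |∫ t in c..d, w t * (g t * E t)| :=
          mul_le_mul_of_nonneg_left (low.trans hle) (abs_nonneg _)
      _ = |∫ t in c..d, (g' t * T t + H t * g t)| := by rw [← abs_mul, key2]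
      _ ≤ _ := up
  rw [intervalIntegral.integral_sub (hEi.sub (hωi.const_mul B)) (hχi.const_mul B),
    intervalIntegral.integral_add ((hVi.const_mul _).add (hχi.const_mul _)) hHbi,
    intervalIntegral.integral_add (hVi.const_mul _) (hχi.const_mul _),
    intervalIntegral.integral_const_mul (κ / 2),
    intervalIntegral.integral_const_mul (2 * B / (h ^ 2 * κ)),
    intervalIntegral.integral_const_mul B] at fin
  have c1 : |m| * ε * (B * ∫ t in c..d, χ t) ≤ |m| * ε * (B * h) := by gcongr
  have c2 : 2 * B / (h ^ 2 * κ) * (∫ t in c..d, χ t) ≤ 2 * B / (h * κ) := by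
    calc _ ≤ 2 * B / (h ^ 2 * κ) * h := by gcongr
      _ = _ := by field_simp
  nlinarith [fin, c1, c2]

theorem sum_bound (a b : ℝ) (h κ B ε : ℝ) (hh : 0 < h) (hκ : 0 < κ) (hB : 0 ≤ B)
    (hε : 0 < ε) (w E V T H Hb ω : ℝ → ℝ) (m : ℝ)
    (n : ℕ) (x : ℕ → ℝ) (hx0 : x 0 = a) (hxlast : x (n + 1) = b)
    (hxmono : ∀ k ≤ n, x k < x (k + 1))
    (s : ℝ) (hs : s = 1 ∨ s = -1)
    (hsign : ∀ k ≤ n, ∀ᵐ t ∂(volume.restrict (Set.Ioo (x k) (x (k + 1)))),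
        0 < s * (-1 : ℝ) ^ k * w t)
    (hwi : IntervalIntegrable w volume a b)
    (hE : ContinuousOn E (Set.Icc a b)) (hE0 : ∀ t ∈ Set.Icc a b, 0 ≤ E t)
    (hEB : ∀ t ∈ Set.Icc a b, E t ≤ B)
    (hV : ContinuousOn V (Set.Icc a b)) (hV0 : ∀ t ∈ Set.Icc a b, 0 ≤ V t)
    (hT : IsPrim T (fun t => H t - m * w t * E t) a b)
    (hTE : ∀ t ∈ Set.Icc a b, T t ^ 2 ≤ E t * V t)
    (hHi : IntervalIntegrable H volume a b)
    (hHbi : IntervalIntegrable Hb volume a b)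
    (hHb : ∀ t ∈ Set.Icc a b, |H t| ≤ Hb t)
    (hωi : IntervalIntegrable ω volume a b)
    (hω : ∀ t ∈ Set.Ioo a b, (ω t = 1 ∨ (ω t = 0 ∧ ε ≤ |w t|))) :
    |m| * ε * ((∫ t in a..b, E t) - B * ∫ t in a..b, ω t) ≤
      (n + 1) * (|m| * ε * (B * h)) + (κ / 2 * (∫ t in a..b, V t) +
        (n + 1) * (2 * B / (h * κ)) + ∫ t in a..b, Hb t) := by
  have hlo : ∀ k ≤ n + 1, a ≤ x k := by
    intro k
    induction k with
    | zero => intro _; rw [hx0]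
    | succ k ih => intro hk; exact (ih (by omega)).trans (hxmono k (by omega)).le
  have hhi' : ∀ j ≤ n + 1, x (n + 1 - j) ≤ b := by
    intro j
    induction j with
    | zero => intro _; rw [Nat.sub_zero, hxlast]
    | succ j ih =>
      intro hj
      refine le_trans ?_ (ih (by omega))
      have := hxmono (n + 1 - (j + 1)) (by omega)
      rw [show n + 1 - (j + 1) + 1 = n + 1 - j by omega] at this
      exact this.le
  have hhi : ∀ k ≤ n + 1, x k ≤ b := by
    intro k hk
    have := hhi' (n + 1 - k) (by omega)
    rwa [show n + 1 - (n + 1 - k) = k by omega] at this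
  have hab : a ≤ b := by have := hlo (n + 1) le_rfl; rwa [hxlast] at this
  have hu : Set.uIcc a b = Set.Icc a b := Set.uIcc_of_le hab
  have hEi : IntervalIntegrable E volume a b := (hu ▸ hE).intervalIntegrable
  have hVi : IntervalIntegrable V volume a b := (hu ▸ hV).intervalIntegrable
  have adj : ∀ f : ℝ → ℝ, IntervalIntegrable f volume a b →
      ∑ k ∈ Finset.range (n + 1), ∫ t in x k..x (k + 1), f t = ∫ t in a..b, f t := by
    intro f hf
    rw [intervalIntegral.sum_integral_adjacent_intervals, hx0, hxlast]
    intro k hk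
    exact ii_mono hf (hlo k (by omega)) (hxmono k (by omega)).le (hhi (k + 1) (by omega))
  have hp : ∀ k ∈ Finset.range (n + 1),
      |m| * ε * ∫ t in x k..x (k + 1), (E t - B * ω t) ≤
      |m| * ε * (B * h) + (κ / 2 * (∫ t in x k..x (k + 1), V t) + 2 * B / (h * κ) +
        ∫ t in x k..x (k + 1), Hb t) := by
    intro k hk
    have hk' : k ≤ n := by have := Finset.mem_range.1 hk; omega
    have h1 := hlo k (by omega)
    have h2 := hxmono k hk'
    have h3 := hhi (k + 1) (by omega)
    have hss : Set.Icc (x k) (x (k + 1)) ⊆ Set.Icc a b := Set.Icc_subset_Icc h1 h3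
    refine piece_bound (x k) (x (k + 1)) h κ B ε (s * (-1) ^ k) h2 hh hκ hB hε ?_ w E V T H Hb ω m
      (hsign k hk') (ii_mono hwi h1 h2.le h3) (hE.mono hss) (fun t ht => hE0 t (hss ht))
      (fun t ht => hEB t (hss ht)) (hV.mono hss) (fun t ht => hV0 t (hss ht))
      (hT.restrict h1 h2.le h3) (fun t ht => hTE t (hss ht)) (ii_mono hHi h1 h2.le h3)
      (ii_mono hHbi h1 h2.le h3) (fun t ht => hHb t (hss ht)) (ii_mono hωi h1 h2.le h3)
      (fun t ht => hω t (Set.Ioo_subset_Ioo h1 h3 ht))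
    rcases hs with hs | hs <;> rcases neg_one_pow_eq_or ℝ k with hk | hk <;> rw [hs, hk] <;> simp
  have := Finset.sum_le_sum hp
  rw [← Finset.mul_sum, adj _ (hEi.sub (hωi.const_mul B)), Finset.sum_add_distrib,
    Finset.sum_add_distrib, Finset.sum_add_distrib, ← Finset.mul_sum _ _ (κ / 2), adj _ hVi, adj _ hHbi,
    intervalIntegral.integral_sub hEi (hωi.const_mul B),
    intervalIntegral.integral_const_mul B] at this
  simpa using this

theorem IsPrim.of_complex {F f : ℝ → ℂ} {a b : ℝ} (hf : IntervalIntegrable f volume a b)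
    (h : ∀ y ∈ Set.Icc a b, F y = F a + ∫ t in a..y, f t) :
    IsPrim (fun t => (F t).re) (fun t => (f t).re) a b ∧
      IsPrim (fun t => (F t).im) (fun t => (f t).im) a b := by
  have sub : ∀ y ∈ Set.Icc a b, IntervalIntegrable f volume a y := fun y hy =>
    hf.mono_set (by
      rw [Set.uIcc_of_le hy.1, Set.uIcc_of_le (hy.1.trans hy.2)]
      exact Set.Icc_subset_Icc le_rfl hy.2)
  refine ⟨⟨⟨hf.1.re, hf.2.re⟩, fun y hy => ?_⟩, ⟨⟨hf.1.im, hf.2.im⟩, fun y hy => ?_⟩⟩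
  · have := Complex.reCLM.intervalIntegral_comp_comm (sub y hy)
    simp only [Complex.reCLM_apply] at this
    simp only [this, h y hy, Complex.add_re]
  · have := Complex.imCLM.intervalIntegral_comp_comm (sub y hy)
    simp only [Complex.imCLM_apply] at this
    simp only [this, h y hy, Complex.add_im]

/-- Sup bound for `E = |φ|²` from the vanishing of the weighted mean. -/
theorem sup_bound (a b : ℝ) (hab : a < b) (w E V R : ℝ → ℝ) (α δ M2 : ℝ)
    (hwi : IntervalIntegrable w volume a b)
    (hw0 : (∫ t in a..b, w t) ≠ 0)
    (hδ : δ = 2 + 2 * (∫ t in a..b, |w t|) / |∫ t in a..b, w t|)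
    (hE : IsPrim E (fun t => 2 * R t) a b) (hE0 : ∀ t ∈ Set.Icc a b, 0 ≤ E t)
    (hV : ContinuousOn V (Set.Icc a b)) (hV0 : ∀ t ∈ Set.Icc a b, 0 ≤ V t)
    (hRc : ContinuousOn R (Set.Icc a b))
    (hR : ∀ t ∈ Set.Icc a b, R t ^ 2 ≤ E t * V t)
    (hmean : ∫ t in a..b, w t * E t = 0)
    (y0 : ℝ) (hy0 : y0 ∈ Set.Icc a b) (hM : M2 = E y0)
    (hα : 0 < α) (hVα : ∫ t in a..b, V t ≤ α * M2) :
    M2 ≤ α * δ ^ 2 * ∫ t in a..b, E t := by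
  have hu : Set.uIcc a b = Set.Icc a b := Set.uIcc_of_le hab.le
  have cE := hE.continuousOn hab.le
  have hEi : IntervalIntegrable E volume a b := (hu ▸ cE).intervalIntegrable
  have hVi : IntervalIntegrable V volume a b := (hu ▸ hV).intervalIntegrable
  have hRi : IntervalIntegrable R volume a b := (hu ▸ hRc).intervalIntegrable
  have hRai : IntervalIntegrable (fun t => |R t|) volume a b := hRi.abs
  set S : ℝ := ∫ t in a..b, |R t| with hS
  have hW : 0 < |∫ t in a..b, w t| := abs_pos.2 hw0
  have hw1 : 0 ≤ ∫ t in a..b, |w t| :=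
    intervalIntegral.integral_nonneg hab.le fun t _ => abs_nonneg _
  have hδ2 : 2 ≤ δ := by
    rw [hδ]; have : 0 ≤ 2 * (∫ t in a..b, |w t|) / |∫ t in a..b, w t| := by positivity
    linarith
  have hS0 : 0 ≤ S := intervalIntegral.integral_nonneg hab.le fun t _ => abs_nonneg _
  have osc1 : ∀ c d, a ≤ c → c ≤ d → d ≤ b → |E d - E c| ≤ 2 * S := by
    intro c d h1 h2 h3
    rw [hE.sub_eq h1 h2 h3, add_sub_cancel_left, intervalIntegral.integral_const_mul, abs_mul,
      abs_of_pos (by norm_num : (0:ℝ) < 2)]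
    refine mul_le_mul_of_nonneg_left ?_ (by norm_num)
    refine (intervalIntegral.abs_integral_le_integral_abs h2).trans ?_
    exact intervalIntegral.integral_mono_interval h1 h2 h3
      (Filter.Eventually.of_forall fun t => abs_nonneg _) hRai
  have osc : ∀ t ∈ Set.Icc a b, |M2 - E t| ≤ 2 * S := by
    intro t ht
    rw [hM]
    rcases le_total t y0 with h | h
    · exact osc1 t y0 ht.1 h hy0.2
    · rw [abs_sub_comm]; exact osc1 y0 t hy0.1 h ht.2
  have hM0 : 0 ≤ M2 := hM ▸ hE0 y0 hy0
  have iwE : IntervalIntegrable (fun t => w t * E t) volume a b := hwi.mul_continuousOn (hu ▸ cE)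
  have e1 : M2 * |∫ t in a..b, w t| ≤ (∫ t in a..b, |w t|) * (2 * S) := by
    have : M2 * (∫ t in a..b, w t) = ∫ t in a..b, w t * (M2 - E t) := by
      rw [← sub_zero (M2 * _), ← hmean, ← intervalIntegral.integral_const_mul,
        ← intervalIntegral.integral_sub (hwi.const_mul M2) iwE]
      congr 1; ext t; ring
    rw [← abs_of_nonneg hM0, ← abs_mul, this, ← intervalIntegral.integral_mul_const,
      ← Real.norm_eq_abs]
    refine intervalIntegral.norm_integral_le_of_norm_le hab.le ?_ (hwi.abs.mul_const _)
    refine Filter.Eventually.of_forall fun t ht => ?_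
    rw [Real.norm_eq_abs, abs_mul]
    exact mul_le_mul_of_nonneg_left (osc t (Set.Ioc_subset_Icc_self ht)) (abs_nonneg _)
  have e2 : M2 ≤ δ * S := by
    have : M2 ≤ (∫ t in a..b, |w t|) * (2 * S) / |∫ t in a..b, w t| := by
      rwa [le_div_iff₀ hW]
    have h' : δ * S = 2 * S + (∫ t in a..b, |w t|) * (2 * S) / |∫ t in a..b, w t| := by
      rw [hδ]; field_simp
    linarith
  have hτ : 0 < α * δ := by positivity
  have e3 : S ≤ ∫ t in a..b, (α * δ / 2 * E t + 1 / (2 * (α * δ)) * V t) := by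
    refine intervalIntegral.integral_mono_on hab.le hRai
      ((hEi.const_mul _).add (hVi.const_mul _)) fun t ht => ?_
    have h0 := hE0 t ht
    have h1 := hV0 t ht
    apply abs_le_of_sq_le_sq _ (by positivity)
    refine (hR t ht).trans ?_
    have : E t * V t = 4 * (α * δ / 2 * E t) * (1 / (2 * (α * δ)) * V t) := by
      field_simp; ring
    rw [this]
    nlinarith [sq_nonneg (α * δ / 2 * E t - 1 / (2 * (α * δ)) * V t)]
  rw [intervalIntegral.integral_add (hEi.const_mul _) (hVi.const_mul _),
    intervalIntegral.integral_const_mul, intervalIntegral.integral_const_mul] at e3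
  have e4 : 1 / (2 * (α * δ)) * (∫ t in a..b, V t) ≤ 1 / (2 * (α * δ)) * (α * M2) := by gcongr
  have e5 : δ * (1 / (2 * (α * δ)) * (α * M2)) = M2 / 2 := by field_simp
  have e6 : δ * S ≤ δ * (α * δ / 2 * (∫ t in a..b, E t) + 1 / (2 * (α * δ)) * (α * M2)) :=
    mul_le_mul_of_nonneg_left (by linarith) (by linarith)
  nlinarith

set_option maxHeartbeats 2000000 in
/-- Corollary 3.6 of the paper (for separated self-adjoint boundary conditions):
if p = 1, the weight w has exactly n turning points and ∫ₐᵇ w ≠ 0, then the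
non-real eigenvalues satisfy |Im λ| ≤ (8/ε)α²δ³(n+1) and
|Re λ| ≤ (2/ε)αδ²(4αδ(n+1) + α + ‖q‖₁). -/
theorem nonreal_eigenvalue_bounds_turning_points_delta
    (a b : ℝ) (hab : a < b) (q w : ℝ → ℝ)
    (hqm : Measurable q) (hwm : Measurable w)
    (hq_int : IntegrableOn q (Set.Ioc a b))
    (hw_int : IntegrableOn w (Set.Ioc a b))
    (hw_ne : ∀ᵐ x ∂(volume.restrict (Set.Ioc a b)), w x ≠ 0)
    (hw_pos : 0 < volume {x ∈ Set.Ioc a b | 0 < w x})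
    (hw_neg : 0 < volume {x ∈ Set.Ioc a b | w x < 0})
    -- w has exactly n turning points x 1 < … < x n in (a,b)
    (n : ℕ) (x : ℕ → ℝ) (hx0 : x 0 = a) (hxlast : x (n + 1) = b)
    (hxmono : ∀ k ≤ n, x k < x (k + 1))
    (s : ℝ) (hs : s = 1 ∨ s = -1)
    (hsign : ∀ k ≤ n, ∀ᵐ t ∂(volume.restrict (Set.Ioo (x k) (x (k + 1)))),
        0 < s * (-1 : ℝ) ^ k * w t)
    (hw0 : (∫ t in a..b, w t) ≠ 0)
    (δ : ℝ) (hδ : δ = 2 + 2 * (∫ t in a..b, |w t|) / |∫ t in a..b, w t|)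
    (l r : ℝ) (α : ℝ)
    (hα : α = |l| + |r| + ∫ t in a..b, |min (q t) 0|)
    (ε : ℝ) (hε : 0 < ε)
    (hεcond : volume {x | x ∈ Set.Ioo a b ∧ |w x| < ε}
        ≤ ENNReal.ofReal (1 / (4 * α * δ ^ 2))) :
    ∀ lam : ℂ, lam.im ≠ 0 →
      ∀ φ u : ℝ → ℂ,
        ContinuousOn φ (Set.Icc a b) → ContinuousOn u (Set.Icc a b) →
        (∀ y ∈ Set.Icc a b, φ y = φ a + ∫ t in a..y, u t) →
        (∀ y ∈ Set.Icc a b,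
            u y = u a + ∫ t in a..y, ((q t : ℂ) - lam * (w t : ℂ)) * φ t) →
        (∃ y ∈ Set.Icc a b, φ y ≠ 0) →
        u a = (l : ℂ) * φ a → u b = (r : ℂ) * φ b →
        |lam.im| ≤ 8 / ε * α ^ 2 * δ ^ 3 * (n + 1)
          ∧ |lam.re| ≤ 2 / ε * α * δ ^ 2 *
              (4 * α * δ * (n + 1) + α + ∫ t in a..b, |q t|) := by
  
  intro lam hlam φ u hφc huc hφ hu ⟨z, hz, hφz⟩ hba hbb
  have huI : Set.uIcc a b = Set.Icc a b := Set.uIcc_of_le hab.le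
  have hqi : IntervalIntegrable q volume a b :=
    (intervalIntegrable_iff_integrableOn_Ioc_of_le hab.le).2 hq_int
  have hwi : IntervalIntegrable w volume a b :=
    (intervalIntegrable_iff_integrableOn_Ioc_of_le hab.le).2 hw_int
  have hci : IntervalIntegrable (fun t => ((q t : ℂ) - lam * (w t : ℂ)) * φ t) volume a b := by
    refine IntervalIntegrable.mul_continuousOn ?_ (huI ▸ hφc)
    have h1 : IntervalIntegrable (fun t => (q t : ℂ)) volume a b := ⟨hqi.1.ofReal, hqi.2.ofReal⟩
    have h2 : IntervalIntegrable (fun t => (w t : ℂ)) volume a b := ⟨hwi.1.ofReal, hwi.2.ofReal⟩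
    exact h1.sub (h2.const_mul lam)
  obtain ⟨pf1, pf2⟩ := IsPrim.of_complex (huI ▸ huc).intervalIntegrable hφ
  obtain ⟨pu1, pu2⟩ := IsPrim.of_complex hci hu
  set f1 : ℝ → ℝ := fun t => (φ t).re with hf1
  set f2 : ℝ → ℝ := fun t => (φ t).im with hf2
  set u1 : ℝ → ℝ := fun t => (u t).re with hu1
  set u2 : ℝ → ℝ := fun t => (u t).im with hu2
  have pu1' : IsPrim u1 (fun t => q t * f1 t - w t * (lam.re * f1 t - lam.im * f2 t)) a b :=
    pu1.congr fun t => by simp [f1, f2]; ring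
  have pu2' : IsPrim u2 (fun t => q t * f2 t - w t * (lam.re * f2 t + lam.im * f1 t)) a b :=
    pu2.congr fun t => by simp [f1, f2]; ring
  set E : ℝ → ℝ := fun t => f1 t * f1 t + f2 t * f2 t with hEdef
  set V : ℝ → ℝ := fun t => u1 t * u1 t + u2 t * u2 t with hVdef
  set R : ℝ → ℝ := fun t => f1 t * u1 t + f2 t * u2 t with hRdef
  set J : ℝ → ℝ := fun t => f1 t * u2 t - f2 t * u1 t with hJdef
  have pE : IsPrim E (fun t => 2 * R t) a b :=
    ((pf1.mul hab.le pf1).add (pf2.mul hab.le pf2)).congr fun t => by simp only [R]; ring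
  have pR : IsPrim R (fun t => (V t + q t * E t) - lam.re * w t * E t) a b :=
    ((pf1.mul hab.le pu1').add (pf2.mul hab.le pu2')).congr fun t => by simp only [V, E]; ring
  have pJ : IsPrim J (fun t => 0 - lam.im * w t * E t) a b :=
    ((pf1.mul hab.le pu2').sub (pf2.mul hab.le pu1')).congr fun t => by simp only [E]; ring
  have cE := pE.continuousOn hab.le
  have cR := pR.continuousOn hab.le
  have cu1 := pu1'.continuousOn hab.le
  have cu2 := pu2'.continuousOn hab.le
  have cV : ContinuousOn V (Set.Icc a b) := (cu1.mul cu1).add (cu2.mul cu2)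
  have E0 : ∀ t, 0 ≤ E t := fun t => add_nonneg (mul_self_nonneg _) (mul_self_nonneg _)
  have V0 : ∀ t, 0 ≤ V t := fun t => add_nonneg (mul_self_nonneg _) (mul_self_nonneg _)
  have RE : ∀ t, R t ^ 2 ≤ E t * V t := fun t => by
    simp only [R, E, V]; nlinarith [sq_nonneg (f1 t * u2 t - f2 t * u1 t)]
  have JE : ∀ t, J t ^ 2 ≤ E t * V t := fun t => by
    simp only [J, E, V]; nlinarith [sq_nonneg (f1 t * u1 t + f2 t * u2 t)]
  have hEi : IntervalIntegrable E volume a b := (huI ▸ cE).intervalIntegrable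
  have hVi : IntervalIntegrable V volume a b := (huI ▸ cV).intervalIntegrable
  have hwE : IntervalIntegrable (fun t => w t * E t) volume a b := hwi.mul_continuousOn (huI ▸ cE)
  have hqE : IntervalIntegrable (fun t => q t * E t) volume a b := hqi.mul_continuousOn (huI ▸ cE)
  -- boundary conditions
  have a1 : u1 a = l * f1 a := by simp only [u1, f1, hba]; simp
  have a2 : u2 a = l * f2 a := by simp only [u2, f2, hba]; simp
  have b1 : u1 b = r * f1 b := by simp only [u1, f1, hbb]; simp
  have b2 : u2 b = r * f2 b := by simp only [u2, f2, hbb]; simp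
  have hbmem : b ∈ Set.Icc a b := ⟨hab.le, le_rfl⟩
  have hamem : a ∈ Set.Icc a b := ⟨le_rfl, hab.le⟩
  have hmean : ∫ t in a..b, w t * E t = 0 := by
    have h1 := pJ.2 b hbmem
    have h2 : J a = 0 := by simp only [J, a1, a2]; ring
    have h3 : J b = 0 := by simp only [J, b1, b2]; ring
    have h4 : ∫ t in a..b, (0 - lam.im * w t * E t) = -lam.im * ∫ t in a..b, w t * E t := by
      rw [← intervalIntegral.integral_const_mul]; congr 1; ext t; ring
    rw [h2, h3, h4, zero_add] at h1
    exact (mul_eq_zero.1 h1.symm).resolve_left (neg_ne_zero.2 hlam)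
  have henergy : (∫ t in a..b, V t) + ∫ t in a..b, q t * E t = r * E b - l * E a := by
    have h1 := pR.2 b hbmem
    have h2 : R a = l * E a := by simp only [R, E, a1, a2]; ring
    have h3 : R b = r * E b := by simp only [R, E, b1, b2]; ring
    have h4 : ∫ t in a..b, ((V t + q t * E t) - lam.re * w t * E t) =
        (∫ t in a..b, V t) + (∫ t in a..b, q t * E t) := by
      have : (fun t => (V t + q t * E t) - lam.re * w t * E t) =
        fun t => (V t + q t * E t) - lam.re * (w t * E t) := by ext t; ring
      rw [this, intervalIntegral.integral_sub (hVi.add hqE) (hwE.const_mul _),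
        intervalIntegral.integral_const_mul, hmean, intervalIntegral.integral_add hVi hqE]
      ring
    rw [h2, h3, h4] at h1
    linarith
  -- the maximum
  obtain ⟨y0, hy0, hmax⟩ := isCompact_Icc.exists_isMaxOn ⟨a, hamem⟩ cE
  have hmax' : ∀ t ∈ Set.Icc a b, E t ≤ E y0 := fun t ht => hmax ht
  have hMpos : 0 < E y0 := by
    refine lt_of_lt_of_le ?_ (hmax' z hz)
    have : E z = Complex.normSq (φ z) := by simp only [E, f1, f2, Complex.normSq_apply]
    rw [this]; exact Complex.normSq_pos.2 hφz
  have hqmi : IntervalIntegrable (fun t => |min (q t) 0|) volume a b := by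
    have : IntervalIntegrable (fun t => min (q t) 0) volume a b := by
      refine ⟨?_, ?_⟩
      · exact hqi.1.inf (integrable_zero _ _ _)
      · exact hqi.2.inf (integrable_zero _ _ _)
    exact this.abs
  have hVα : ∫ t in a..b, V t ≤ α * E y0 := by
    have h1 : -(∫ t in a..b, q t * E t) ≤ (∫ t in a..b, |min (q t) 0|) * E y0 := by
      rw [← intervalIntegral.integral_neg, ← intervalIntegral.integral_mul_const]
      refine intervalIntegral.integral_mono_on hab.le hqE.neg (hqmi.mul_const _) fun t ht => ?_
      have h2 : -q t ≤ |min (q t) 0| := by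
        rw [abs_of_nonpos (min_le_right _ _)]
        exact neg_le_neg (min_le_left _ _)
      calc -(q t * E t) = (-q t) * E t := by ring
        _ ≤ |min (q t) 0| * E t := mul_le_mul_of_nonneg_right h2 (E0 t)
        _ ≤ _ := mul_le_mul_of_nonneg_left (hmax' t ht) (abs_nonneg _)
    have h2 : r * E b ≤ |r| * E y0 :=
      (mul_le_mul_of_nonneg_right (le_abs_self r) (E0 b)).trans
        (mul_le_mul_of_nonneg_left (hmax' b hbmem) (abs_nonneg _))
    have h3 : -l * E a ≤ |l| * E y0 :=
      (mul_le_mul_of_nonneg_right (neg_le_abs l) (E0 a)).trans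
        (mul_le_mul_of_nonneg_left (hmax' a hamem) (abs_nonneg _))
    rw [hα]; nlinarith
  have hsup : ∀ β, 0 < β → α ≤ β → E y0 ≤ β * δ ^ 2 * ∫ t in a..b, E t := by
    intro β hβ hαβ
    exact sup_bound a b hab w E V R β δ (E y0) hwi hw0 hδ pE (fun t _ => E0 t) cV
      (fun t _ => V0 t) cR (fun t _ => RE t) hmean y0 hy0 rfl hβ
      (hVα.trans (mul_le_mul_of_nonneg_right hαβ hMpos.le))
  have hN0 : 0 ≤ ∫ t in a..b, E t := intervalIntegral.integral_nonneg hab.le fun t _ => E0 t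
  have hδ2 : 2 ≤ δ := by
    have hw1 : 0 ≤ ∫ t in a..b, |w t| :=
      intervalIntegral.integral_nonneg hab.le fun t _ => abs_nonneg _
    rw [hδ]; have : 0 ≤ 2 * (∫ t in a..b, |w t|) / |∫ t in a..b, w t| := by positivity
    linarith
  have hα0 : 0 ≤ α := by
    have : 0 ≤ ∫ t in a..b, |min (q t) 0| :=
      intervalIntegral.integral_nonneg hab.le fun t _ => abs_nonneg _
    rw [hα]; positivity
  have hδpos : 0 < δ := by linarith
  set N : ℝ := ∫ t in a..b, E t with hNdef
  have hαpos : 0 < α := by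
    rcases hα0.lt_or_eq with h | h
    · exact h
    · exfalso
      have := hsup (E y0 / (2 * δ ^ 2 * (N + 1))) (by positivity) (by rw [← h]; positivity)
      have e : E y0 / (2 * δ ^ 2 * (N + 1)) * δ ^ 2 * N = E y0 / 2 * (N / (N + 1)) := by
        field_simp
      have e' : N / (N + 1) ≤ 1 := by rw [div_le_one (by linarith)]; linarith
      rw [e] at this
      nlinarith
  have hMN := hsup α hαpos le_rfl
  have hNpos : 0 < N := by
    rcases hN0.lt_or_eq with h | h
    · exact h
    · rw [← h, mul_zero] at hMN; linarith
  -- the bad set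
  set Ω : Set ℝ := {x | x ∈ Set.Ioo a b ∧ |w x| < ε} with hΩdef
  have hΩm : MeasurableSet Ω :=
    measurableSet_Ioo.inter (measurableSet_lt (_root_.continuous_abs.measurable.comp hwm) measurable_const)
  set om : ℝ → ℝ := Ω.indicator (fun _ => 1) with homdef
  have hΩfin : volume Ω ≠ ⊤ := (hεcond.trans_lt ENNReal.ofReal_lt_top).ne
  have homi : Integrable om volume := by
    rw [homdef, integrable_indicator_iff hΩm]
    exact integrableOn_const hΩfin
  have homle : ∫ t in a..b, om t ≤ 1 / (4 * α * δ ^ 2) := by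
    rw [intervalIntegral.integral_of_le hab.le]
    calc ∫ t in Set.Ioc a b, om t ≤ ∫ t, om t :=
          setIntegral_le_integral homi (Filter.Eventually.of_forall
            fun t => Set.indicator_nonneg (fun _ _ => zero_le_one) t)
      _ = volume.real Ω := by rw [homdef, integral_indicator hΩm]; simp
      _ ≤ _ := ENNReal.toReal_le_of_le_ofReal (by positivity) hεcond
  have hom : ∀ t ∈ Set.Ioo a b, (om t = 1 ∨ (om t = 0 ∧ ε ≤ |w t|)) := by
    intro t ht
    by_cases h : t ∈ Ω
    · left; rw [homdef, Set.indicator_of_mem h]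
    · right
      refine ⟨by rw [homdef, Set.indicator_of_notMem h], ?_⟩
      by_contra hc
      exact h ⟨ht, not_le.1 hc⟩
  set B : ℝ := α * δ ^ 2 * N with hBdef
  have hBpos : 0 < B := by positivity
  have hEB : ∀ t ∈ Set.Icc a b, E t ≤ B := fun t ht => (hmax' t ht).trans hMN
  have hVB : ∫ t in a..b, V t ≤ α * B := hVα.trans (mul_le_mul_of_nonneg_left hMN hα0)
  have n1 : (0 : ℝ) < n + 1 := by positivity
  set h : ℝ := 1 / (4 * α * δ ^ 2 * (n + 1)) with hhdef
  have hh : 0 < h := by positivity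
  set κ : ℝ := 4 * (n + 1) * δ with hκdef
  have hκ : 0 < κ := by positivity
  have final : ∀ (T H Hb : ℝ → ℝ) (m : ℝ),
      IsPrim T (fun t => H t - m * w t * E t) a b → (∀ t, T t ^ 2 ≤ E t * V t) →
      IntervalIntegrable H volume a b → IntervalIntegrable Hb volume a b →
      (∀ t ∈ Set.Icc a b, |H t| ≤ Hb t) →
      |m| * ε * (N / 2) ≤ 4 * α ^ 2 * δ ^ 3 * (n + 1) * N + ∫ t in a..b, Hb t := by
    intro T H Hb m hT hTE hHi hHbi hHb
    have := sum_bound a b h κ B ε hh hκ hBpos.le hε w E V T H Hb om m n x hx0 hxlast hxmono s hs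
      hsign hwi cE (fun t _ => E0 t) hEB cV (fun t _ => V0 t) hT (fun t _ => hTE t) hHi hHbi hHb
      homi.intervalIntegrable hom
    have k1 : B * (∫ t in a..b, om t) ≤ N / 4 := by
      calc _ ≤ B * (1 / (4 * α * δ ^ 2)) := mul_le_mul_of_nonneg_left homle hBpos.le
        _ = N / 4 := by rw [hBdef]; field_simp
    have k2 : (n + 1) * (|m| * ε * (B * h)) = |m| * ε * (N / 4) := by
      rw [hBdef, hhdef]; field_simp
    have k3 : (n + 1) * (2 * B / (h * κ)) = 2 * α ^ 2 * δ ^ 3 * (n + 1) * N := by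
      rw [hBdef, hhdef, hκdef]; field_simp
    have k4 : κ / 2 * (∫ t in a..b, V t) ≤ 2 * α ^ 2 * δ ^ 3 * (n + 1) * N := by
      calc _ ≤ κ / 2 * (α * B) := mul_le_mul_of_nonneg_left hVB (by positivity)
        _ = _ := by rw [hBdef, hκdef]; ring
    have k5 : |m| * ε * (N - N / 4) ≤ |m| * ε * (N - B * ∫ t in a..b, om t) :=
      mul_le_mul_of_nonneg_left (by linarith) (by positivity)
    rw [k2, k3] at this
    linarith
  have hqa : 0 ≤ ∫ t in a..b, |q t| :=
    intervalIntegral.integral_nonneg hab.le fun t _ => abs_nonneg _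
  constructor
  · have := final J (fun _ => 0) (fun _ => 0) lam.im pJ JE intervalIntegrable_const
      intervalIntegrable_const (fun t _ => by simp)
    rw [intervalIntegral.integral_zero, add_zero] at this
    have e : 8 / ε * α ^ 2 * δ ^ 3 * (n + 1) =
        (4 * α ^ 2 * δ ^ 3 * (n + 1) * N) / (ε * (N / 2)) := by field_simp; ring
    rw [e, le_div_iff₀ (by positivity)]
    linarith
  · have hqaE : IntervalIntegrable (fun t => |q t| * E t) volume a b :=
      hqi.abs.mul_continuousOn (huI ▸ cE)
    have := final R (fun t => V t + q t * E t) (fun t => V t + |q t| * E t) lam.re pR RE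
      (hVi.add hqE) (hVi.add hqaE) (fun t _ => by
        refine (abs_add_le _ _).trans ?_
        rw [abs_of_nonneg (V0 t), abs_mul, abs_of_nonneg (E0 t)])
    rw [intervalIntegral.integral_add hVi hqaE] at this
    have hq2 : ∫ t in a..b, |q t| * E t ≤ (∫ t in a..b, |q t|) * B := by
      rw [← intervalIntegral.integral_mul_const]
      exact intervalIntegral.integral_mono_on hab.le hqaE (hqi.abs.mul_const _) fun t ht =>
        mul_le_mul_of_nonneg_left (hEB t ht) (abs_nonneg _)
    have e : 2 / ε * α * δ ^ 2 * (4 * α * δ * (n + 1) + α + ∫ t in a..b, |q t|) =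
        (4 * α ^ 2 * δ ^ 3 * (n + 1) * N + (α * B + (∫ t in a..b, |q t|) * B)) /
          (ε * (N / 2)) := by rw [hBdef]; field_simp; ring
    rw [e, le_div_iff₀ (by positivity)]
    linarith
end

section
/- Let λ ∈ ℝ with λ ≠ 0 and let (φ, u) be a solution of −(pφ')' + qφ = λwφ on [a,b] satisfying separated self-adjoint boundary conditions u(a) = l·φ(a), u(b) = r·φ(b) with l, r ∈ ℝ, and suppose λ·∫ₐᵇ w|φ|² ≤ 0. Then ‖φ'‖_{p,2} ≤ β·‖φ‖_{1/p,2} and ‖φ‖_∞ ≤ γ·‖φ‖_{1/p,2}, where the constants α, β, γ are built from c := |l| + |r|. -/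
open MeasureTheory Real Complex

lemma gs_prod_real {a b : ℝ} (hab : a ≤ b) {F G f g : ℝ → ℝ}
    (hf : IntervalIntegrable f volume a b) (hg : IntervalIntegrable g volume a b)
    (hF : ∀ x ∈ Set.Icc a b, F x = F a + ∫ t in a..x, f t)
    (hG : ∀ x ∈ Set.Icc a b, G x = G a + ∫ t in a..x, g t) :
    ∫ t in a..b, (f t * G t + F t * g t) = F b * G b - F a * G a := by
  have key : ∀ {H h : ℝ → ℝ}, IntervalIntegrable h volume a b →
      AbsolutelyContinuousOnInterval (fun x => H a + ∫ t in a..x, h t) a b := by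
    intro H h hh
    have h1 := hh.absolutelyContinuousOnInterval_intervalIntegral (c := a) (by simp)
    have h2 : AbsolutelyContinuousOnInterval (fun _ : ℝ => H a) a b :=
      (LipschitzWith.const (H a)).lipschitzOnWith.absolutelyContinuousOnInterval
    exact h2.fun_add h1
  have hFa := key (H := F) hf
  have hGa := key (H := G) hg
  have h := hFa.integral_deriv_mul_eq_sub hGa
  have hb : b ∈ Set.Icc a b := ⟨hab, le_rfl⟩
  rw [← hF b hb, ← hG b hb] at h
  simp only [intervalIntegral.integral_same, add_zero] at h
  rw [← h]
  apply intervalIntegral.integral_congr_ae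
  filter_upwards [hf.ae_hasDerivAt_integral, hg.ae_hasDerivAt_integral] with x h1 h2 hx
  have hx' : x ∈ Set.uIcc a b := Set.uIoc_subset_uIcc hx
  have d1 := ((h1 hx' a (by simp)).const_add (F a)).deriv
  have d2 := ((h2 hx' a (by simp)).const_add (G a)).deriv
  rw [Set.uIcc_of_le hab] at hx'
  rw [d1, d2, ← hF x hx', ← hG x hx']

lemma gs_prod {a b : ℝ} (hab : a ≤ b) {F G f g : ℝ → ℂ}
    (hf : IntervalIntegrable f volume a b) (hg : IntervalIntegrable g volume a b)
    (hFc : ContinuousOn F (Set.Icc a b)) (hGc : ContinuousOn G (Set.Icc a b))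
    (hF : ∀ x ∈ Set.Icc a b, F x = F a + ∫ t in a..x, f t)
    (hG : ∀ x ∈ Set.Icc a b, G x = G a + ∫ t in a..x, g t) :
    ∫ t in a..b, (((f t).re * (G t).re + (F t).re * (g t).re) +
      ((f t).im * (G t).im + (F t).im * (g t).im))
      = ((F b).re * (G b).re - (F a).re * (G a).re) +
        ((F b).im * (G b).im - (F a).im * (G a).im) := by
  have reI : ∀ {h : ℝ → ℂ}, IntervalIntegrable h volume a b →
      IntervalIntegrable (fun t => (h t).re) volume a b := fun h =>
    ⟨h.1.re, h.2.re⟩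
  have imI : ∀ {h : ℝ → ℂ}, IntervalIntegrable h volume a b →
      IntervalIntegrable (fun t => (h t).im) volume a b := fun h =>
    ⟨h.1.im, h.2.im⟩
  have sub : ∀ {h : ℝ → ℂ}, IntervalIntegrable h volume a b → ∀ x ∈ Set.Icc a b,
      IntervalIntegrable h volume a x := by
    intro h hh x hx
    refine hh.mono_set ?_
    rw [Set.uIcc_of_le hx.1, Set.uIcc_of_le hab]
    exact Set.Icc_subset_Icc_right hx.2
  have re : ∀ {H h : ℝ → ℂ}, IntervalIntegrable h volume a b →
      (∀ x ∈ Set.Icc a b, H x = H a + ∫ t in a..x, h t) →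
      ∀ x ∈ Set.Icc a b, (H x).re = (H a).re + ∫ t in a..x, (h t).re := by
    intro H h hh hH x hx
    have := Complex.reCLM.intervalIntegral_comp_comm (sub hh x hx)
    simp only [Complex.reCLM_apply] at this
    rw [this, ← Complex.add_re, ← hH x hx]
  have im : ∀ {H h : ℝ → ℂ}, IntervalIntegrable h volume a b →
      (∀ x ∈ Set.Icc a b, H x = H a + ∫ t in a..x, h t) →
      ∀ x ∈ Set.Icc a b, (H x).im = (H a).im + ∫ t in a..x, (h t).im := by
    intro H h hh hH x hx
    have := Complex.imCLM.intervalIntegral_comp_comm (sub hh x hx)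
    simp only [Complex.imCLM_apply] at this
    rw [this, ← Complex.add_im, ← hH x hx]
  rw [← Set.uIcc_of_le hab] at hFc hGc
  have c1 := Complex.continuous_re.comp_continuousOn hFc
  have c2 := Complex.continuous_re.comp_continuousOn hGc
  have c3 := Complex.continuous_im.comp_continuousOn hFc
  have c4 := Complex.continuous_im.comp_continuousOn hGc
  rw [intervalIntegral.integral_add,
    gs_prod_real (F := fun t => (F t).re) (G := fun t => (G t).re) hab (reI hf) (reI hg)
      (re hf hF) (re hg hG),
    gs_prod_real (F := fun t => (F t).im) (G := fun t => (G t).im) hab (imI hf) (imI hg)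
      (im hf hF) (im hg hG)]
  · exact ((reI hf).mul_continuousOn c2).add ((reI hg).continuousOn_mul c1)
  · exact ((imI hf).mul_continuousOn c4).add ((imI hg).continuousOn_mul c3)

lemma gs_nsq (z : ℂ) : ‖z‖ ^ 2 = z.re * z.re + z.im * z.im := by
  rw [← Complex.normSq_eq_norm_sq, Complex.normSq_apply]

lemma gs_cross (z v : ℂ) : |z.re * v.re + z.im * v.im| ≤ ‖z‖ * ‖v‖ := by
  apply abs_le_of_sq_le_sq _ (by positivity)
  rw [mul_pow, gs_nsq, gs_nsq]
  nlinarith [sq_nonneg (z.re * v.im - z.im * v.re)]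

lemma gs_final {P N2 D2 C M α β : ℝ} (hP : 0 < P) (hN : 0 ≤ N2) (hD : 0 ≤ D2)
    (hC0 : 0 ≤ C) (hα : 0 ≤ α) (hM : M ≤ N2 / P + 2 * C) (hC : C ^ 2 ≤ N2 * D2)
    (hDM : D2 ≤ α * M) (hβ : β = √(α * (1 / P + α)) + α) :
    √D2 ≤ β * √N2 ∧ M ≤ (2 * β + 1 / P) * N2 := by
  have hN' := Real.sq_sqrt hN
  have hD' := Real.sq_sqrt hD
  set N := √N2
  set D := √D2
  have hN0 : 0 ≤ N := Real.sqrt_nonneg _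
  have hD0 : 0 ≤ D := Real.sqrt_nonneg _
  have hCN : C ≤ N * D := by
    apply le_of_sq_le_sq _ (by positivity)
    rw [mul_pow, hN', hD']; exact hC
  have hM' : M ≤ N ^ 2 / P + 2 * (N * D) := by rw [hN']; linarith
  have hs0 : 0 ≤ α * (1 / P + α) := by positivity
  have hs := Real.sq_sqrt hs0
  set s := √(α * (1 / P + α))
  have hs0 : 0 ≤ s := Real.sqrt_nonneg _
  have h1 : D ^ 2 ≤ α * (N ^ 2 / P + 2 * (N * D)) := by
    rw [hD']; exact hDM.trans (by gcongr)
  have h2 : (D - α * N) ^ 2 ≤ (s * N) ^ 2 := by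
    rw [mul_pow, hs]
    have : α * (1 / P + α) * N ^ 2 = α * (N ^ 2 / P) + α ^ 2 * N ^ 2 := by ring
    rw [this]; nlinarith
  have h3 : D - α * N ≤ s * N := (le_abs_self _).trans (abs_le_of_sq_le_sq h2 (by positivity))
  have h4 : D ≤ β * N := by rw [hβ]; linarith
  refine ⟨h4, ?_⟩
  rw [← hN']
  have : (2 * β + 1 / P) * N ^ 2 = N ^ 2 / P + 2 * (N * (β * N)) := by ring
  rw [this]
  refine hM'.trans ?_
  gcongr

/-- Lemma 4.2 of the paper for separated self-adjoint boundary conditions: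
for a real eigenvalue λ ≠ 0 whose eigenfunction satisfies λ∫ₐᵇ w|φ|² ≤ 0,
‖φ'‖_{p,2} ≤ β·‖φ‖_{1/p,2} and ‖φ‖_∞ ≤ γ·‖φ‖_{1/p,2}. -/
theorem ghost_state_norm_estimates_separated
    (a b : ℝ) (hab : a < b) (p q w : ℝ → ℝ)
    (hpm : Measurable p) (hqm : Measurable q) (hwm : Measurable w)
    (hp_pos : ∀ᵐ x ∂(volume.restrict (Set.Ioc a b)), 0 < p x)
    (hp_int : IntegrableOn (fun x => 1 / p x) (Set.Ioc a b))
    (hq_int : IntegrableOn q (Set.Ioc a b))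
    (hw_int : IntegrableOn w (Set.Ioc a b))
    (hw_ne : ∀ᵐ x ∂(volume.restrict (Set.Ioc a b)), w x ≠ 0)
    (lam : ℝ) (hlam : lam ≠ 0) (φ u : ℝ → ℂ)
    (hφc : ContinuousOn φ (Set.Icc a b)) (huc : ContinuousOn u (Set.Icc a b))
    (hφ : ∀ x ∈ Set.Icc a b, φ x = φ a + ∫ t in a..x, u t / (p t : ℂ))
    (hu : ∀ x ∈ Set.Icc a b,
        u x = u a + ∫ t in a..x, ((q t : ℂ) - (lam : ℂ) * (w t : ℂ)) * φ t)
    (l r : ℝ) (hbca : u a = (l : ℂ) * φ a) (hbcb : u b = (r : ℂ) * φ b)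
    (hghost : lam * ∫ t in a..b, w t * ‖φ t‖ ^ 2 ≤ 0)
    (c α β γ : ℝ)
    (hc : c = |l| + |r|)
    (hα : α = c + ∫ t in a..b, |min (q t) 0|)
    (hβ : β = Real.sqrt (α * (1 / (∫ t in a..b, 1 / p t) + α)) + α)
    (hγ : γ = Real.sqrt (2 * β + 1 / (∫ t in a..b, 1 / p t))) :
    Real.sqrt (∫ t in a..b, ‖u t‖ ^ 2 / p t)
        ≤ β * Real.sqrt (∫ t in a..b, ‖φ t‖ ^ 2 / p t)
      ∧ sSup ((fun x => ‖φ x‖) '' Set.Icc a b)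
        ≤ γ * Real.sqrt (∫ t in a..b, ‖φ t‖ ^ 2 / p t) := by
  have hab' := hab.le
  have hii : ∀ {f : ℝ → ℝ}, IntegrableOn f (Set.Ioc a b) → IntervalIntegrable f volume a b :=
    fun h => (intervalIntegrable_iff_integrableOn_Ioc_of_le hab').2 h
  have hpI := hii hp_int
  have hqI := hii hq_int
  have hwI := hii hw_int
  have hp_ae : ∀ᵐ x ∂(volume.restrict (Set.Ioc a b)), 0 ≤ 1 / p x := by
    filter_upwards [hp_pos] with x hx
    positivity
  have hφn : ContinuousOn (fun t => ‖φ t‖) (Set.uIcc a b) := by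
    rw [Set.uIcc_of_le hab']; exact hφc.norm
  have hun : ContinuousOn (fun t => ‖u t‖) (Set.uIcc a b) := by
    rw [Set.uIcc_of_le hab']; exact huc.norm
  have hφc' : ContinuousOn φ (Set.uIcc a b) := by rwa [Set.uIcc_of_le hab']
  have huc' : ContinuousOn u (Set.uIcc a b) := by rwa [Set.uIcc_of_le hab']
  have hIN : IntervalIntegrable (fun t => ‖φ t‖ ^ 2 / p t) volume a b := by
    simpa [div_eq_mul_inv] using hpI.continuousOn_mul (hφn.pow 2)
  have hID : IntervalIntegrable (fun t => ‖u t‖ ^ 2 / p t) volume a b := by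
    simpa [div_eq_mul_inv] using hpI.continuousOn_mul (hun.pow 2)
  have hIC : IntervalIntegrable (fun t => ‖φ t‖ * ‖u t‖ / p t) volume a b := by
    simpa [div_eq_mul_inv] using hpI.continuousOn_mul (hφn.mul hun)
  have hIf : IntervalIntegrable (fun t => u t / (p t : ℂ)) volume a b := by
    have h : IntervalIntegrable (fun t => ((1 / p t : ℝ) : ℂ)) volume a b :=
      ⟨hpI.1.ofReal, hpI.2.ofReal⟩
    simpa [div_eq_mul_inv] using h.continuousOn_mul huc'
  have hIg : IntervalIntegrable (fun t => ((q t : ℂ) - (lam : ℂ) * (w t : ℂ)) * φ t)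
      volume a b := by
    have h1 : IntervalIntegrable (fun t => (q t : ℂ)) volume a b :=
      ⟨hqI.1.ofReal, hqI.2.ofReal⟩
    have h2 : IntervalIntegrable (fun t => (w t : ℂ)) volume a b :=
      ⟨hwI.1.ofReal, hwI.2.ofReal⟩
    exact (h1.sub (h2.const_mul (lam : ℂ))).mul_continuousOn hφc'
  have hIq : IntervalIntegrable (fun t => q t * ‖φ t‖ ^ 2) volume a b :=
    hqI.mul_continuousOn (hφn.pow 2)
  have hIw : IntervalIntegrable (fun t => w t * ‖φ t‖ ^ 2) volume a b :=
    hwI.mul_continuousOn (hφn.pow 2)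
  have hqm_int : IntegrableOn (fun t => |min (q t) 0|) (Set.Ioc a b) := by
    refine Integrable.mono hq_int (by fun_prop) (Filter.Eventually.of_forall fun t => ?_)
    simp only [Real.norm_eq_abs, abs_abs]
    rcases min_cases (q t) 0 with h | h
    · rw [h.1]
    · rw [h.1]; simp
  have hIqm := hii hqm_int
  set P := ∫ t in a..b, 1 / p t with hPdef
  set N2 := ∫ t in a..b, ‖φ t‖ ^ 2 / p t with hN2def
  set D2 := ∫ t in a..b, ‖u t‖ ^ 2 / p t with hD2def
  set C := ∫ t in a..b, ‖φ t‖ * ‖u t‖ / p t with hCdef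
  set Q := ∫ t in a..b, |min (q t) 0| with hQdef
  have hmono : ∀ {f g : ℝ → ℝ}, IntervalIntegrable f volume a b →
      IntervalIntegrable g volume a b → (∀ t ∈ Set.Icc a b, 0 < p t → f t ≤ g t) →
      ∫ t in a..b, f t ≤ ∫ t in a..b, g t := by
    intro f g hf hg h
    rw [intervalIntegral.integral_of_le hab', intervalIntegral.integral_of_le hab']
    refine integral_mono_ae ((intervalIntegrable_iff_integrableOn_Ioc_of_le hab').1 hf)
      ((intervalIntegrable_iff_integrableOn_Ioc_of_le hab').1 hg) ?_
    filter_upwards [hp_pos, ae_restrict_mem measurableSet_Ioc] with t ht hm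
    exact h t (Set.Ioc_subset_Icc_self hm) ht
  have hnn : ∀ {f : ℝ → ℝ}, IntervalIntegrable f volume a b →
      (∀ t ∈ Set.Icc a b, 0 < p t → 0 ≤ f t) → 0 ≤ ∫ t in a..b, f t := by
    intro f hf h
    have := hmono (f := fun _ => 0) (by simp) hf h
    simpa using this
  have hP : 0 < P := by
    refine (intervalIntegral.integral_pos_iff_support_of_nonneg_ae' ?_ hpI).2 ⟨hab, ?_⟩
    · rw [Set.uIoc_of_le hab']; exact hp_ae
    · have h1 : volume (Set.Ioc a b) ≤
          volume (Function.support (fun t => 1 / p t) ∩ Set.Ioc a b) := by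
        apply measure_mono_ae
        have := (ae_restrict_iff' measurableSet_Ioc).1 hp_pos
        filter_upwards [this] with x hx hm
        exact ⟨by simpa using (hx hm).ne', hm⟩
      refine lt_of_lt_of_le ?_ h1
      simp [hab]
  have hN0 : 0 ≤ N2 := hnn hIN fun t _ h => by positivity
  have hD0 : 0 ≤ D2 := hnn hID fun t _ h => by positivity
  have hC0 : 0 ≤ C := hnn hIC fun t _ h => by positivity
  have hQ0 : 0 ≤ Q := hnn hIqm fun t _ h => by positivity
  have hα0 : 0 ≤ α := by rw [hα, hc]; positivity
  have hCS : C ^ 2 ≤ N2 * D2 := by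
    have h : ∀ s : ℝ, 0 ≤ N2 * (s * s) + (-(2 * C)) * s + D2 := by
      intro s
      have h1 : N2 * (s * s) + (-(2 * C)) * s + D2 =
          ∫ t in a..b, ((s * s) * (‖φ t‖ ^ 2 / p t) + (-(2 * s)) * (‖φ t‖ * ‖u t‖ / p t)
            + ‖u t‖ ^ 2 / p t) := by
        rw [intervalIntegral.integral_add ((hIN.const_mul _).add (hIC.const_mul _)) hID,
          intervalIntegral.integral_add (hIN.const_mul _) (hIC.const_mul _),
          intervalIntegral.integral_const_mul, intervalIntegral.integral_const_mul]
        ring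
      rw [h1]
      refine hnn (((hIN.const_mul _).add (hIC.const_mul _)).add hID) fun t _ ht => ?_
      have : (s * s) * (‖φ t‖ ^ 2 / p t) + (-(2 * s)) * (‖φ t‖ * ‖u t‖ / p t)
            + ‖u t‖ ^ 2 / p t = (s * ‖φ t‖ - ‖u t‖) ^ 2 / p t := by ring
      rw [this]; positivity
    have := discrim_le_zero h
    rw [discrim] at this
    nlinarith
  have hosc0 : ∀ x ∈ Set.Icc a b, ‖φ x‖ ^ 2 - ‖φ a‖ ^ 2 =
      ∫ t in a..x, 2 * (((φ t).re * (u t).re + (φ t).im * (u t).im) / p t) := by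
    intro x hx
    have hs : Set.Icc a x ⊆ Set.Icc a b := Set.Icc_subset_Icc_right hx.2
    have hIx : IntervalIntegrable (fun t => u t / (p t : ℂ)) volume a x :=
      hIf.mono_set (by rw [Set.uIcc_of_le hx.1, Set.uIcc_of_le hab']; exact hs)
    have := gs_prod hx.1 hIx hIx (hφc.mono hs) (hφc.mono hs)
      (fun y hy => hφ y (hs hy)) (fun y hy => hφ y (hs hy))
    rw [gs_nsq, gs_nsq]
    have e : ∀ t, 2 * (((φ t).re * (u t).re + (φ t).im * (u t).im) / p t) =
        (((u t / (p t : ℂ)).re * (φ t).re + (φ t).re * (u t / (p t : ℂ)).re) +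
      ((u t / (p t : ℂ)).im * (φ t).im + (φ t).im * (u t / (p t : ℂ)).im)) := by
      intro t
      rw [Complex.div_ofReal_re, Complex.div_ofReal_im]; ring
    simp_rw [e]
    rw [this]; ring
  have hIo : IntervalIntegrable
      (fun t => 2 * (((φ t).re * (u t).re + (φ t).im * (u t).im) / p t)) volume a b := by
    have c1 := Complex.continuous_re.comp_continuousOn hφc'
    have c2 := Complex.continuous_re.comp_continuousOn huc'
    have c3 := Complex.continuous_im.comp_continuousOn hφc'
    have c4 := Complex.continuous_im.comp_continuousOn huc'
    have := (hpI.continuousOn_mul ((c1.mul c2).add (c3.mul c4))).const_mul 2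
    simpa [div_eq_mul_inv] using this
  have hosc : ∀ x ∈ Set.Icc a b, ∀ y ∈ Set.Icc a b, ‖φ x‖ ^ 2 - ‖φ y‖ ^ 2 ≤ 2 * C := by
    intro x hx y hy
    have hsub : ∀ z ∈ Set.Icc a b, IntervalIntegrable
      (fun t => 2 * (((φ t).re * (u t).re + (φ t).im * (u t).im) / p t)) volume a z := by
      intro z hz
      exact hIo.mono_set (by
        rw [Set.uIcc_of_le hz.1, Set.uIcc_of_le hab']; exact Set.Icc_subset_Icc_right hz.2)
    have h1 : ‖φ x‖ ^ 2 - ‖φ y‖ ^ 2 =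
        ∫ t in y..x, 2 * (((φ t).re * (u t).re + (φ t).im * (u t).im) / p t) := by
      rw [← intervalIntegral.integral_interval_sub_left (hsub x hx) (hsub y hy),
        ← hosc0 x hx, ← hosc0 y hy]
      ring
    rw [h1]
    refine (Real.le_norm_self _).trans ?_
    refine (intervalIntegral.norm_integral_le_integral_norm_uIoc (E := ℝ)).trans ?_
    have h2 : ∫ t in Set.uIoc y x,
        |2 * (((φ t).re * (u t).re + (φ t).im * (u t).im) / p t)| ≤
        ∫ t in Set.Ioc a b, |2 * (((φ t).re * (u t).re + (φ t).im * (u t).im) / p t)| := by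
      refine setIntegral_mono_set ?_ (Filter.Eventually.of_forall fun t => abs_nonneg _) ?_
      · exact ((intervalIntegrable_iff_integrableOn_Ioc_of_le hab').1 hIo).abs
      · refine (Set.Ioc_subset_Ioc ?_ ?_).eventuallyLE
        · exact le_min hy.1 hx.1
        · exact max_le hy.2 hx.2
    refine h2.trans ?_
    rw [← intervalIntegral.integral_of_le hab', hCdef, ← intervalIntegral.integral_const_mul]
    refine hmono hIo.abs (hIC.const_mul 2) fun t _ ht => ?_
    rw [abs_mul, abs_div, abs_of_pos ht, abs_of_pos (by norm_num : (0 : ℝ) < 2)]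
    gcongr
    exact gs_cross _ _
  have hne : (Set.Icc a b).Nonempty := ⟨a, le_rfl, hab'⟩
  obtain ⟨x, hx, hxmax⟩ := isCompact_Icc.exists_isMaxOn hne hφc.norm
  obtain ⟨y, hy, hymin⟩ := isCompact_Icc.exists_isMinOn hne hφc.norm
  have hmax : ∀ t ∈ Set.Icc a b, ‖φ t‖ ^ 2 ≤ ‖φ x‖ ^ 2 := fun t ht =>
    pow_le_pow_left₀ (norm_nonneg _) (hxmax ht) 2
  have hmin : ∀ t ∈ Set.Icc a b, ‖φ y‖ ^ 2 ≤ ‖φ t‖ ^ 2 := fun t ht =>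
    pow_le_pow_left₀ (norm_nonneg _) (hymin ht) 2
  have hyN : ‖φ y‖ ^ 2 ≤ N2 / P := by
    rw [le_div_iff₀ hP, hPdef, ← intervalIntegral.integral_const_mul]
    refine hmono (hpI.const_mul _) hIN fun t ht hpt => ?_
    rw [mul_one_div]
    gcongr ?_ / _
    exact hmin t ht
  have hM : ‖φ x‖ ^ 2 ≤ N2 / P + 2 * C := by
    have := hosc x hx y hy
    linarith
  have hen : D2 + ((∫ t in a..b, q t * ‖φ t‖ ^ 2) - lam * ∫ t in a..b, w t * ‖φ t‖ ^ 2)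
      = r * ‖φ b‖ ^ 2 - l * ‖φ a‖ ^ 2 := by
    have := gs_prod hab' hIf hIg hφc huc hφ hu
    rw [hbca, hbcb] at this
    rw [← intervalIntegral.integral_const_mul, ← intervalIntegral.integral_sub hIq
      (hIw.const_mul _), hD2def, ← intervalIntegral.integral_add hID (hIq.sub (hIw.const_mul _))]
    have e : ∀ t, ‖u t‖ ^ 2 / p t + (q t * ‖φ t‖ ^ 2 - lam * (w t * ‖φ t‖ ^ 2)) =
        (((u t / (p t : ℂ)).re * (u t).re +
          (φ t).re * (((q t : ℂ) - (lam : ℂ) * (w t : ℂ)) * φ t).re) +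
        ((u t / (p t : ℂ)).im * (u t).im +
          (φ t).im * (((q t : ℂ) - (lam : ℂ) * (w t : ℂ)) * φ t).im)) := by
      intro t
      have : ((q t : ℂ) - (lam : ℂ) * (w t : ℂ)) = ((q t - lam * w t : ℝ) : ℂ) := by
        push_cast; ring
      rw [this, Complex.re_ofReal_mul, Complex.im_ofReal_mul, Complex.div_ofReal_re,
        Complex.div_ofReal_im, gs_nsq, gs_nsq]
      ring
    simp_rw [e]
    rw [this, gs_nsq, gs_nsq]
    simp only [Complex.re_ofReal_mul, Complex.im_ofReal_mul]
    ring
  have hqb : -(∫ t in a..b, q t * ‖φ t‖ ^ 2) ≤ Q * ‖φ x‖ ^ 2 := by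
    rw [← intervalIntegral.integral_neg, hQdef, ← intervalIntegral.integral_mul_const]
    refine hmono hIq.neg (hIqm.mul_const _) fun t ht _ => ?_
    have h1 : -(q t) ≤ |min (q t) 0| := by
      have := neg_abs_le (min (q t) 0)
      have := min_le_left (q t) 0
      linarith
    calc -(q t * ‖φ t‖ ^ 2) = -(q t) * ‖φ t‖ ^ 2 := by ring
      _ ≤ |min (q t) 0| * ‖φ t‖ ^ 2 := by gcongr
      _ ≤ _ := by gcongr ?_ * ?_; exact hmax t ht
  have hDM : D2 ≤ α * ‖φ x‖ ^ 2 := by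
    have h1 : r * ‖φ b‖ ^ 2 ≤ |r| * ‖φ x‖ ^ 2 :=
      mul_le_mul (le_abs_self r) (hmax b ⟨hab', le_rfl⟩) (by positivity) (abs_nonneg r)
    have h2 : -l * ‖φ a‖ ^ 2 ≤ |l| * ‖φ x‖ ^ 2 :=
      mul_le_mul (neg_le_abs l) (hmax a ⟨le_rfl, hab'⟩) (by positivity) (abs_nonneg l)
    rw [hα, hc]
    nlinarith
  obtain ⟨r1, r2⟩ := gs_final hP hN0 hD0 hC0 hα0 hM hCS hDM hβ
  refine ⟨r1, ?_⟩
  have hβ0 : 0 ≤ β := by rw [hβ]; positivity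
  apply csSup_le (hne.image _)
  rintro _ ⟨t, ht, rfl⟩
  rw [hγ, ← Real.sqrt_mul (by positivity)]
  apply Real.le_sqrt_of_sq_le
  exact (hmax t ht).trans r2
end
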